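/- arXiv:1407.1919 — 3 statements merged into one kernel-verified Lean document; each statement's English description precedes it below -/
import Mathlib

section
/- For every natural number r, the count S_5(r) satisfies 241920·S_5(r) = (r+1)(r+2)(r+3)·(43r⁸ + 688r⁷ + 4934r⁶ + 20680r⁵ + 55907r⁴ + 101272r³ + 123436r² + 96240r + 40320). -/
/-- `S n r` is the number of `n × n` matrices with nonnegative integer entries,
all diagonal entries zero, and every row sum and every column sum equal to `r`. -/
noncomputable def S (n r : ℕ) : ℕ :=
  Nat.card {M : Matrix (Fin n) (Fin n) ℕ //
    (∀ i, M i i = 0) ∧ (∀ i, ∑ j, M i j = r) ∧ (∀ j, ∑ i, M i j = r)}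

/-!
Count natural matrices supported in a set `A` of cells with all line sums `r`. By Birkhoff's theorem
such a matrix with `r ≠ 0` dominates a permutation matrix; subtracting a fixed permutation `P ⊆ A`
and applying inclusion–exclusion to the cells of `P` where a matrix vanishes gives
`N_A(r) = ∑ T ⊆ P, (-1) ^ #T * N_{A \ T}(r + 1)`, so `N_A` is a polynomial by induction on `A`. For
`A` the set of all off-diagonal cells of an `n × n` matrix, the same recurrence with `P = A` has
shift `n - 1`. At a line sum smaller than the shift the alternating sum is zero, as no matrix
dominates one of larger line sum, so `N_A` vanishes at `-1, …, -(n - 2)`. For `n = 5` a matrix is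
determined by 11 of its entries and `r`, so the degree is at most 11, and the zeros `-1, -2, -3`
together with the values at `0, …, 8` determine the polynomial. These values are single digits of
large numbers, read off by Kronecker substitution from the product of the generating functions of
the rows.
-/

open Finset Polynomial

section Polynomials

lemma exists_eval_natCast_eq_sum_range (g : ℚ[X]) :
    ∃ p : ℚ[X], ∀ n : ℕ, p.eval (n : ℚ) = ∑ k ∈ range n, g.eval (k : ℚ) := by
  induction g using Polynomial.induction_on' with
  | add g₁ g₂ ih₁ ih₂ =>
    obtain ⟨p₁, hp₁⟩ := ih₁
    obtain ⟨p₂, hp₂⟩ := ih₂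
    exact ⟨p₁ + p₂, fun n => by simp [hp₁, hp₂, sum_add_distrib]⟩
  | monomial m a =>
    refine ⟨C (a / (m + 1)) * (Polynomial.bernoulli (m + 1) - C (_root_.bernoulli (m + 1))),
      fun n => ?_⟩
    have hm : (m + 1 : ℚ) ≠ 0 := by positivity
    have faulhaber := sum_range_pow_eq_bernoulli_sub n m
    simp only [eval_mul, eval_C, eval_sub, eval_monomial, ← mul_sum]
    rw [← Nat.succ_eq_add_one, ← faulhaber, ← mul_assoc, div_mul_cancel₀ a hm]

lemma exists_eq_eval_natCast_of_sub_eq_eval {f : ℕ → ℚ} {g : ℚ[X]}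
    (hf : ∀ n : ℕ, f (n + 1) - f n = g.eval (n : ℚ)) :
    ∃ p : ℚ[X], ∀ n : ℕ, f n = p.eval (n : ℚ) := by
  obtain ⟨p, hp⟩ := exists_eval_natCast_eq_sum_range g
  refine ⟨p + C (f 0), fun n => ?_⟩
  rw [eval_add, eval_C, hp, ← sum_congr rfl fun k _ => hf k, sum_range_sub, sub_add_cancel]

lemma eq_of_forall_eval_natCast_eq {R : Type*} [CommRing R] [IsDomain R] [CharZero R]
    {p q : R[X]} (h : ∀ n : ℕ, p.eval (n : R) = q.eval (n : R)) : p = q :=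
  eq_of_infinite_eval_eq p q <|
    (Set.infinite_range_of_injective Nat.cast_injective).mono (Set.range_subset_iff.2 h)

lemma eq_of_natDegree_lt_of_eval_intCast_eq {R : Type*} [CommRing R] [IsDomain R] [CharZero R]
    {p q : R[X]} {m n : ℕ} (hp : p.natDegree < m + n) (hq : q.natDegree < m + n)
    (hneg : ∀ j : ℕ, 0 < j → j ≤ m → p.eval (-j : R) = q.eval (-j : R))
    (hnat : ∀ r < n, p.eval (r : R) = q.eval (r : R)) : p = q := by
  have hcard : #(Ico (-m : ℤ) n) = m + n := by
    rw [Int.card_Ico]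
    lia
  have hdegree {f : R[X]} (hf : f.natDegree < m + n) : f.degree < #(Ico (-m : ℤ) n) :=
    degree_le_natDegree.trans_lt <| by rwa [hcard, Nat.cast_lt]
  refine eq_of_degrees_lt_of_eval_index_eq (Ico (-m : ℤ) n) (v := Int.cast)
    Int.cast_injective.injOn (hdegree hp) (hdegree hq) fun z hz => ?_
  obtain ⟨hzm, hzn⟩ := mem_Ico.1 hz
  rcases lt_or_ge z 0 with hz | hz
  · obtain ⟨j, rfl⟩ := Int.exists_eq_neg_ofNat hz.le
    simpa using hneg j (by lia) (by lia)
  · lift z to ℕ using hz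
    simpa using hnat z (by lia)

lemma natDegree_le_of_forall_abs_eval_natCast_le {𝕜 : Type*} [NormedField 𝕜] [LinearOrder 𝕜]
    [IsStrictOrderedRing 𝕜] [Archimedean 𝕜] [OrderTopology 𝕜]
    {p : 𝕜[X]} {d : ℕ} (h : ∀ n : ℕ, |p.eval (n : 𝕜)| ≤ (n + 1) ^ d) : p.natDegree ≤ d := by
  by_contra! hd
  have hdeg : ((X + C 1 : 𝕜[X]) ^ d).degree < p.degree :=
    degree_lt_degree (by rwa [natDegree_pow, natDegree_X_add_C, mul_one])
  have htop := abs_div_tendsto_atTop_atTop_of_degree_gt p ((X + C 1) ^ d) hdeg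
    (pow_ne_zero d (X_add_C_ne_zero 1))
  obtain ⟨n, hn⟩ :=
    (tendsto_natCast_atTop_atTop.eventually (htop.eventually_gt_atTop 1)).exists
  have hpos : (0 : 𝕜) < (n + 1) ^ d := by positivity
  have hn : 1 < |p.eval (n : 𝕜) / (n + 1) ^ d| := by simpa using hn
  rw [abs_div, abs_of_pos hpos, one_lt_div hpos] at hn
  exact hn.not_ge (h n)

end Polynomials

section SemimagicSquares

variable {ι : Type*} [DecidableEq ι] {A P : Finset (ι × ι)} {k r : ℕ} {M E : ι → ι → ℕ}

/-- The 0-1 matrix with ones exactly in the cells of `P`. -/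
def cellMatrix (P : Finset (ι × ι)) : ι → ι → ℕ :=
  fun i j => if (i, j) ∈ P then 1 else 0

lemma cellMatrix_le_iff : (∀ i j, cellMatrix P i j ≤ M i j) ↔ ∀ c ∈ P, M c.1 c.2 ≠ 0 := by
  simp only [cellMatrix, Prod.forall]
  refine forall₂_congr fun i j => ?_
  split_ifs with h <;> simp [h, Nat.one_le_iff_ne_zero]

variable [Fintype ι]

/-- The natural matrices supported in the cells of `A` whose row sums are all `r`. -/
def rowSumMatrices (A : Finset (ι × ι)) (r : ℕ) : Finset (ι → ι → ℕ) :=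
  Fintype.piFinset fun i => piAntidiag {j | (i, j) ∈ A} r

/-- The natural matrices supported in the cells of `A` whose row and column sums are all `r`: the
lattice points of the `r`-th dilate of a face of the Birkhoff polytope. In particular,
`cellMatrix P ∈ semimagicSquares A k` says that `P ⊆ A` has `k` cells in each row and column. -/
def semimagicSquares (A : Finset (ι × ι)) (r : ℕ) : Finset (ι → ι → ℕ) :=
  {M ∈ rowSumMatrices A r | ∀ j, ∑ i, M i j = r}

lemma mem_rowSumMatrices :
    M ∈ rowSumMatrices A r ↔ (∀ i j, (i, j) ∉ A → M i j = 0) ∧ ∀ i, ∑ j, M i j = r := by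
  simp only [rowSumMatrices, Fintype.mem_piFinset, mem_piAntidiag, mem_filter_univ, ← forall_and]
  refine forall_congr' fun i => ?_
  rw [and_comm, forall_congr' fun j => (not_imp_comm (a := M i j = 0)).symm]
  refine and_congr_right fun hA => ?_
  rw [sum_filter_of_ne fun j _ hj => hA j hj]

lemma mem_semimagicSquares :
    M ∈ semimagicSquares A r ↔
      (∀ i j, (i, j) ∉ A → M i j = 0) ∧ (∀ i, ∑ j, M i j = r) ∧ ∀ j, ∑ i, M i j = r := by
  rw [semimagicSquares, mem_filter, mem_rowSumMatrices, and_assoc]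

lemma apply_le_of_mem_rowSumMatrices (hM : M ∈ rowSumMatrices A r) (i j : ι) : M i j ≤ r :=
  (single_le_sum_of_canonicallyOrdered (f := M i) (mem_univ j)).trans_eq
    ((mem_rowSumMatrices.1 hM).2 i)

lemma subset_of_cellMatrix_mem (hP : cellMatrix P ∈ semimagicSquares A k) : P ⊆ A := by
  rintro ⟨i, j⟩ hij
  by_contra hA
  simpa [cellMatrix, hij] using (mem_semimagicSquares.1 hP).1 i j hA

lemma card_filter_le_semimagicSquares (hE : E ∈ semimagicSquares A k) (r : ℕ) :
    #{M ∈ semimagicSquares A (r + k) | ∀ i j, E i j ≤ M i j} = #(semimagicSquares A r) := by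
  obtain ⟨hEA, hErow, hEcol⟩ := mem_semimagicSquares.1 hE
  refine (card_nbij' (· + E) (· - E) (fun M hM => ?_) (fun M hM => ?_) (fun M _ => ?_)
    fun M hM => ?_).symm
  · obtain ⟨hA, hrow, hcol⟩ := mem_semimagicSquares.1 hM
    simp +contextual [mem_semimagicSquares, sum_add_distrib, hA, hrow, hcol, hEA, hErow, hEcol]
  · obtain ⟨hM, hEM⟩ := mem_filter.1 hM
    obtain ⟨hA, hrow, hcol⟩ := mem_semimagicSquares.1 hM
    refine mem_semimagicSquares.2 ⟨fun i j h => ?_, fun i => ?_, fun j => ?_⟩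
    · simp [hA i j h]
    · simp only [Pi.sub_apply]
      rw [sum_tsub_distrib _ fun j _ => hEM i j, hrow, hErow, Nat.add_sub_cancel]
    · simp only [Pi.sub_apply]
      rw [sum_tsub_distrib _ fun i _ => hEM i j, hcol, hEcol, Nat.add_sub_cancel]
  · exact add_tsub_cancel_right M E
  · exact tsub_add_cancel_of_le (mem_filter.1 hM).2

lemma filter_le_semimagicSquares_eq_empty [Nonempty ι] (hE : E ∈ semimagicSquares A k)
    (hr : r < k) : {M ∈ semimagicSquares A r | ∀ i j, E i j ≤ M i j} = ∅ := by
  refine filter_eq_empty_iff.2 fun M hM hEM => hr.not_ge ?_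
  obtain ⟨i⟩ := ‹Nonempty ι›
  rw [← (mem_semimagicSquares.1 hE).2.1 i, ← (mem_semimagicSquares.1 hM).2.1 i]
  exact sum_le_sum fun j _ => hEM i j

lemma semimagicSquares_sdiff (A T : Finset (ι × ι)) (r : ℕ) :
    semimagicSquares (A \ T) r = {M ∈ semimagicSquares A r | ∀ c ∈ T, M c.1 c.2 = 0} := by
  ext M
  simp only [mem_filter, mem_semimagicSquares, mem_sdiff, Prod.forall]
  grind

/-- Inclusion–exclusion over the set of cells of `P` in which a matrix vanishes. -/
lemma card_filter_cellMatrix_le_eq_sum_powerset (A P : Finset (ι × ι)) (r : ℕ) :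
    (#{M ∈ semimagicSquares A r | ∀ i j, cellMatrix P i j ≤ M i j} : ℤ) =
      ∑ T ∈ P.powerset, (-1) ^ #T * (#(semimagicSquares (A \ T) r) : ℤ) := by
  let Z (M : ι → ι → ℕ) : Finset (ι × ι) := {c ∈ P | M c.1 c.2 = 0}
  have hsdiff : ∀ T ∈ P.powerset,
      semimagicSquares (A \ T) r = {M ∈ semimagicSquares A r | T ⊆ Z M} := by
    intro T hT
    rw [semimagicSquares_sdiff]
    exact filter_congr fun M _ => by grind
  have hpow (M : ι → ι → ℕ) : {T ∈ P.powerset | T ⊆ Z M} = (Z M).powerset := by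
    ext T
    simpa using fun h : T ⊆ Z M => h.trans (filter_subset _ P)
  calc (#{M ∈ semimagicSquares A r | ∀ i j, cellMatrix P i j ≤ M i j} : ℤ)
      = ∑ M ∈ semimagicSquares A r, if Z M = ∅ then 1 else 0 := by
        simp [cellMatrix_le_iff, Z, filter_eq_empty_iff]
    _ = ∑ M ∈ semimagicSquares A r, ∑ T ∈ P.powerset, if T ⊆ Z M then (-1) ^ #T else 0 := by
        simp only [← sum_filter, hpow, sum_powerset_neg_one_pow_card]
    _ = ∑ T ∈ P.powerset, (-1) ^ #T * (#(semimagicSquares (A \ T) r) : ℤ) := by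
        rw [sum_comm]
        refine sum_congr rfl fun T hT => ?_
        rw [hsdiff T hT, ← sum_filter, sum_const, nsmul_eq_mul, mul_comm]

lemma card_semimagicSquares_eq_sum_powerset (hP : cellMatrix P ∈ semimagicSquares A k) (r : ℕ) :
    (#(semimagicSquares A r) : ℤ) =
      ∑ T ∈ P.powerset, (-1) ^ #T * (#(semimagicSquares (A \ T) (r + k)) : ℤ) := by
  rw [← card_filter_le_semimagicSquares hP, card_filter_cellMatrix_le_eq_sum_powerset]

lemma sum_powerset_card_semimagicSquares_eq_zero [Nonempty ι]
    (hP : cellMatrix P ∈ semimagicSquares A k) (hr : r < k) :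
    ∑ T ∈ P.powerset, (-1) ^ #T * (#(semimagicSquares (A \ T) r) : ℤ) = 0 := by
  rw [← card_filter_cellMatrix_le_eq_sum_powerset, filter_le_semimagicSquares_eq_empty hP hr,
    card_empty, Nat.cast_zero]

/-- Birkhoff's theorem provides a permutation inside the support. -/
lemma exists_cellMatrix_mem_semimagicSquares (hM : M ∈ semimagicSquares A r) (hr : r ≠ 0) :
    ∃ P, cellMatrix P ∈ semimagicSquares A 1 := by
  obtain ⟨hA, hrow, hcol⟩ := mem_semimagicSquares.1 hM
  have hds : (Matrix.of fun i j => (M i j : ℚ) / r) ∈ doublyStochastic ℚ ι := by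
    refine mem_doublyStochastic_iff_sum.2 ⟨fun i j => ?_, fun i => ?_, fun j => ?_⟩
    · exact div_nonneg (Nat.cast_nonneg _) (Nat.cast_nonneg _)
    · simp [← sum_div, ← Nat.cast_sum, hrow, hr]
    · simp [← sum_div, ← Nat.cast_sum, hcol, hr]
  obtain ⟨w, hw, hw_sum, hw_eq⟩ := exists_eq_sum_perm_of_mem_doublyStochastic hds
  obtain ⟨σ, -, hσ⟩ : ∃ σ ∈ univ, w σ ≠ 0 :=
    exists_ne_zero_of_sum_ne_zero (hw_sum.trans_ne one_ne_zero)
  have hσA (i : ι) : (i, σ i) ∈ A := by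
    by_contra h
    have hsum : ∑ τ, w τ * (if τ i = σ i then 1 else 0) = 0 := by
      have := congrFun₂ hw_eq i (σ i)
      simpa [Matrix.sum_apply, hA _ _ h, PEquiv.toMatrix_apply] using this
    rw [sum_eq_zero_iff_of_nonneg fun τ _ => mul_nonneg (hw τ) (by positivity)] at hsum
    exact hσ (by simpa using hsum σ (mem_univ σ))
  refine ⟨({c | σ c.1 = c.2} : Finset (ι × ι)),
    mem_semimagicSquares.2 ⟨fun i j h => ?_, fun i => ?_, fun j => ?_⟩⟩
  · have : σ i ≠ j := by rintro rfl; exact h (hσA i)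
    simpa [cellMatrix] using this
  · simp [cellMatrix]
  · simp [cellMatrix, ← Equiv.eq_symm_apply]

end SemimagicSquares

section Reciprocity

variable {ι : Type*} [DecidableEq ι] [Fintype ι] {A P : Finset (ι × ι)} {M : ι → ι → ℕ} {k : ℕ}

lemma exists_eval_eq_card_semimagicSquares_of_ssubset
    (hP : cellMatrix P ∈ semimagicSquares A 1)
    (ih : ∀ B ⊂ A, ∃ q : ℚ[X], ∀ r ≠ 0, (#(semimagicSquares B r) : ℚ) = q.eval (r : ℚ)) :
    ∃ p : ℚ[X], ∀ r : ℕ, (#(semimagicSquares A r) : ℚ) = p.eval (r : ℚ) := by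
  have hPA := subset_of_cellMatrix_mem hP
  have hsdiff : ∀ T ∈ P.powerset.erase ∅, A \ T ⊂ A := fun T hT => by
    obtain ⟨hT, hTP⟩ := mem_erase.1 hT
    exact sdiff_ssubset ((mem_powerset.1 hTP).trans hPA) (nonempty_iff_ne_empty.2 hT)
  choose! q hq using fun T hT => ih _ (hsdiff T hT)
  refine exists_eq_eval_natCast_of_sub_eq_eval
    (g := -(∑ T ∈ P.powerset.erase ∅, C ((-1) ^ #T) * q T).comp (X + C 1)) fun r => ?_
  have hrec := congrArg (Int.cast : ℤ → ℚ) (card_semimagicSquares_eq_sum_powerset hP r)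
  rw [← add_sum_erase _ _ (empty_mem_powerset P)] at hrec
  push_cast at hrec
  rw [hrec, eval_neg, eval_comp, eval_finsetSum]
  simp only [card_empty, pow_zero, one_mul, sdiff_empty, sub_add_cancel_left, neg_inj]
  refine sum_congr rfl fun T hT => ?_
  rw [hq T hT (r + 1) r.succ_ne_zero]
  simp

lemma exists_eval_eq_card_semimagicSquares_of_ne_zero (A : Finset (ι × ι)) :
    ∃ p : ℚ[X], ∀ r ≠ 0, (#(semimagicSquares A r) : ℚ) = p.eval (r : ℚ) := by
  induction A using Finset.strongInduction with
  | H A ih =>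
    by_cases hA : ∃ r ≠ 0, (semimagicSquares A r).Nonempty
    · obtain ⟨r, hr, M, hM⟩ := hA
      obtain ⟨P, hP⟩ := exists_cellMatrix_mem_semimagicSquares hM hr
      obtain ⟨p, hp⟩ := exists_eval_eq_card_semimagicSquares_of_ssubset hP ih
      exact ⟨p, fun r _ => hp r⟩
    · push Not at hA
      exact ⟨0, fun r hr => by simp [hA r hr]⟩

theorem exists_eval_eq_card_semimagicSquares (hM : M ∈ semimagicSquares A k) (hk : k ≠ 0) :
    ∃ p : ℚ[X], ∀ r : ℕ, (#(semimagicSquares A r) : ℚ) = p.eval (r : ℚ) := by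
  obtain ⟨P, hP⟩ := exists_cellMatrix_mem_semimagicSquares hM hk
  exact exists_eval_eq_card_semimagicSquares_of_ssubset hP fun B _ =>
    exists_eval_eq_card_semimagicSquares_of_ne_zero B

theorem eval_neg_eq_zero_of_cellMatrix_mem [Nonempty ι] {p : ℚ[X]}
    (hp : ∀ r : ℕ, (#(semimagicSquares A r) : ℚ) = p.eval (r : ℚ))
    (hP : cellMatrix P ∈ semimagicSquares A k) {j : ℕ} (hj : 0 < j) (hjk : j < k) :
    p.eval (-j : ℚ) = 0 := by
  choose q hq using exists_eval_eq_card_semimagicSquares_of_ne_zero (ι := ι)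
  have hrec : p = (∑ T ∈ P.powerset, C ((-1) ^ #T) * q (A \ T)).comp (X + C (k : ℚ)) := by
    refine eq_of_forall_eval_natCast_eq fun r => ?_
    rw [← hp, ← Int.cast_natCast, card_semimagicSquares_eq_sum_powerset hP]
    have hrk : r + k ≠ 0 := by lia
    simp [eval_finsetSum, hq _ _ hrk]
  have hzero := congrArg (Int.cast : ℤ → ℚ)
    (sum_powerset_card_semimagicSquares_eq_zero hP (Nat.sub_lt (hj.trans hjk) hj))
  have hkj : k - j ≠ 0 := by lia
  rw [hrec, ← Int.cast_zero, ← hzero]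
  simp [eval_finsetSum, hq _ _ hkj, Nat.cast_sub hjk.le, neg_add_eq_sub]

end Reciprocity

section Degree

variable {ι : Type*} [DecidableEq ι] [Fintype ι]

lemma card_semimagicSquares_le {A F : Finset (ι × ι)} {r : ℕ}
    (hF : ∀ M ∈ semimagicSquares A r, ∀ N ∈ semimagicSquares A r,
      (∀ c ∈ F, M c.1 c.2 = N c.1 c.2) → M = N) :
    #(semimagicSquares A r) ≤ (r + 1) ^ #F := by
  calc #(semimagicSquares A r)
      ≤ #(F.pi fun _ => range (r + 1)) := by
        refine card_le_card_of_injOn (fun M c _ => M c.1 c.2) (fun M hM => ?_)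
          fun M hM N hN hMN => hF M hM N hN fun c hc => congrFun₂ hMN c hc
        exact mem_pi.2 fun c _ => mem_range_succ_iff.2 <|
          apply_le_of_mem_rowSumMatrices (mem_filter.1 hM).1 c.1 c.2
    _ = (r + 1) ^ #F := by simp

lemma eq_zero_of_forall_offDiag_erase {R : Type*} [AddCommMonoid R] {d : ι → ι → R} {a b l : ι}
    (hab : a ≠ b) (hal : a ≠ l) (hbl : b ≠ l) (hrow : ∀ i, ∑ j, d i j = 0)
    (hcol : ∀ j, ∑ i, d i j = 0) (hdiag : ∀ i, d i i = 0)
    (hfree : ∀ c ∈ (univ.erase l).offDiag.erase (a, b), d c.1 c.2 = 0) : d = 0 := by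
  have hinner (i j : ι) (hi : i ≠ l) (hj : j ≠ l) (h : (i, j) ≠ (a, b)) : d i j = 0 := by
    by_cases hij : i = j
    · exact hij ▸ hdiag i
    · exact hfree (i, j) (by simp [hi, hj, hij, h])
  have hlastCol (i : ι) (hi : i ≠ a) : d i l = 0 := by
    by_cases hil : i = l
    · exact hil ▸ hdiag l
    · rw [← hrow i, Fintype.sum_eq_single l fun j hj => hinner i j hil hj (by simp [hi])]
  have hlastRow (j : ι) (hj : j ≠ b) : d l j = 0 := by
    by_cases hjl : j = l
    · exact hjl ▸ hdiag l
    · rw [← hcol j, Fintype.sum_eq_single l fun i hi => hinner i j hi hjl (by simp [hj])]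
  have hal' : d a l = 0 := by rw [← hcol l, Fintype.sum_eq_single a hlastCol]
  have hlb : d l b = 0 := by rw [← hrow l, Fintype.sum_eq_single b hlastRow]
  have hab' : d a b = 0 := by
    rw [← hrow a, Fintype.sum_eq_single b fun j hj => ?_]
    by_cases hjl : j = l
    · exact hjl ▸ hal'
    · exact hinner a j hal hjl (by simp [hj])
  ext i j
  rcases eq_or_ne i l with rfl | hil
  · rcases eq_or_ne j b with rfl | hjb
    exacts [hlb, hlastRow j hjb]
  rcases eq_or_ne j l with rfl | hjl
  · rcases eq_or_ne i a with rfl | hia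
    exacts [hal', hlastCol i hia]
  rcases eq_or_ne (i, j) (a, b) with hij | hij
  · cases hij
    exact hab'
  · exact hinner i j hil hjl hij

lemma natDegree_le_of_eval_eq_card_semimagicSquares_offDiag {a b l : ι} (hab : a ≠ b)
    (hal : a ≠ l) (hbl : b ≠ l) {p : ℚ[X]}
    (hp : ∀ r : ℕ, (#(semimagicSquares (univ : Finset ι).offDiag r) : ℚ) = p.eval (r : ℚ)) :
    p.natDegree ≤ #((univ.erase l).offDiag.erase (a, b)) := by
  refine natDegree_le_of_forall_abs_eval_natCast_le fun r => ?_
  rw [← hp, Nat.abs_cast]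
  refine mod_cast card_semimagicSquares_le fun M hM N hN hMN => ?_
  obtain ⟨hMA, hMrow, hMcol⟩ := mem_semimagicSquares.1 hM
  obtain ⟨hNA, hNrow, hNcol⟩ := mem_semimagicSquares.1 hN
  have hsub : (fun i j => (M i j : ℤ) - N i j) = 0 := by
    refine eq_zero_of_forall_offDiag_erase hab hal hbl (fun i => ?_) (fun j => ?_) (fun i => ?_)
      fun c hc => sub_eq_zero.2 (congrArg _ (hMN c hc))
    · rw [sum_sub_distrib, ← Nat.cast_sum, ← Nat.cast_sum, hMrow, hNrow, sub_self]
    · rw [sum_sub_distrib, ← Nat.cast_sum, ← Nat.cast_sum, hMcol, hNcol, sub_self]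
    · simp [hMA i i, hNA i i]
  ext i j
  simpa [sub_eq_zero] using congrFun₂ hsub i j

end Degree

section KroneckerSubstitution

/-- Kronecker substitution: the coefficients of a generating function are the base `B` digits of its
value at `B`, as long as they are too small to carry. -/
lemma sum_pow_div_pow_mod {α : Type*} (s : Finset α) (e : α → ℕ) {B : ℕ} (hB : #s < B) (t : ℕ) :
    (∑ w ∈ s, B ^ e w) / B ^ t % B = #{w ∈ s | e w = t} := by
  have hB₀ : 0 < B := hB.pos
  have hsplit : ∑ w ∈ s, B ^ e w =
      ∑ w ∈ s with e w < t, B ^ e w + (#{w ∈ s | e w = t} * B ^ t +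
        ∑ w ∈ s with t < e w, B ^ e w) := by
    simp only [card_eq_sum_ones, sum_mul, sum_filter, ← sum_add_distrib]
    refine sum_congr rfl fun w _ => ?_
    rcases lt_trichotomy (e w) t with h | h | h
    · simp [h, h.ne, h.not_gt]
    · simp [h]
    · simp [h, h.ne', h.not_gt]
  have hlow : ∑ w ∈ s with e w < t, B ^ e w < B ^ t := by
    refine lt_of_mul_lt_mul_left (a := B) ?_ B.zero_le
    calc B * ∑ w ∈ s with e w < t, B ^ e w
        = ∑ w ∈ s with e w < t, B ^ (e w + 1) := by simp only [mul_sum, pow_succ']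
      _ ≤ #{w ∈ s | e w < t} • B ^ t :=
        sum_le_card_nsmul _ _ _ fun w hw => Nat.pow_le_pow_right hB₀ (mem_filter.1 hw).2
      _ < B * B ^ t := by
        rw [smul_eq_mul]
        gcongr
        exact (card_filter_le _ _).trans_lt hB
  obtain ⟨q, hq⟩ : B ^ (t + 1) ∣ ∑ w ∈ s with t < e w, B ^ e w :=
    dvd_sum fun w hw => pow_dvd_pow B (mem_filter.1 hw).2
  have hdigit : #{w ∈ s | e w = t} < B := (card_filter_le _ _).trans_lt hB
  rw [hsplit, hq, pow_succ, mul_assoc, mul_comm _ (B ^ t), ← mul_add,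
    Nat.add_mul_div_left _ _ (pow_pos hB₀ t), Nat.div_eq_of_lt hlow, zero_add,
    Nat.add_mul_mod_self_left, Nat.mod_eq_of_lt hdigit]

/-- The complete homogeneous symmetric polynomial of degree `k` evaluated at the entries of a list,
in a form suitable for kernel computation. -/
def completeHomogeneous {R : Type*} [CommSemiring R] : List R → ℕ → R
  | [], k => if k = 0 then 1 else 0
  | x :: l, k => ∑ p ∈ antidiagonal k, x ^ p.1 * completeHomogeneous l p.2

variable {ι R : Type*} [DecidableEq ι] [CommSemiring R]

lemma completeHomogeneous_map (x : ι → R) {l : List ι} (hl : l.Nodup) (k : ℕ) :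
    completeHomogeneous (l.map x) k =
      ∑ f ∈ piAntidiag l.toFinset k, ∏ j ∈ l.toFinset, x j ^ f j := by
  induction l generalizing k with
  | nil => by_cases hk : k = 0 <;> simp [completeHomogeneous, hk]
  | cons a l ih =>
    obtain ⟨hal, hl⟩ := List.nodup_cons.1 hl
    have ha : a ∉ l.toFinset := by simpa using hal
    rw [List.toFinset_cons, ← cons_eq_insert _ _ ha, piAntidiag_cons, sum_disjiUnion,
      List.map_cons, completeHomogeneous]
    refine sum_congr rfl fun p _ => ?_
    rw [sum_map, ih hl, mul_sum]
    refine sum_congr rfl fun f hf => ?_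
    have hfa : f a = 0 := by
      by_contra h
      exact ha ((mem_piAntidiag.1 hf).2 a h)
    rw [prod_cons]
    congr 1
    · simp [hfa]
    · refine prod_congr rfl fun j hj => ?_
      simp [ne_of_mem_of_not_mem hj ha]

variable [Fintype ι] {A : Finset (ι × ι)} {L : ι → List ι} {r B : ℕ}

lemma prod_completeHomogeneous_eq_sum_rowSumMatrices (hL : ∀ i, (L i).Nodup)
    (hLA : ∀ i j, j ∈ L i ↔ (i, j) ∈ A) (x : ι → R) (r : ℕ) :
    ∏ i, completeHomogeneous ((L i).map x) r =
      ∑ M ∈ rowSumMatrices A r, ∏ j, x j ^ ∑ i, M i j := by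
  have hrow (i : ι) : (L i).toFinset = ({j | (i, j) ∈ A} : Finset ι) := by ext; simp [hLA]
  simp only [completeHomogeneous_map x (hL _), hrow, rowSumMatrices]
  rw [prod_univ_sum]
  refine sum_congr rfl fun M hM => ?_
  have hMA := (mem_rowSumMatrices.1 hM).1
  simp only [← prod_pow_eq_pow_sum]
  rw [prod_comm]
  refine prod_congr rfl fun i _ => prod_subset (subset_univ _) fun j _ hj => ?_
  rw [hMA i j (by simpa using hj), pow_zero]

lemma card_rowSumMatrices (hL : ∀ i, (L i).Nodup) (hLA : ∀ i j, j ∈ L i ↔ (i, j) ∈ A) (r : ℕ) :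
    #(rowSumMatrices A r) = ∏ i, completeHomogeneous ((L i).map fun _ => 1) r := by
  rw [prod_completeHomogeneous_eq_sum_rowSumMatrices hL hLA]
  simp

lemma card_semimagicSquares_eq_div_mod (hL : ∀ i, (L i).Nodup)
    (hLA : ∀ i j, j ∈ L i ↔ (i, j) ∈ A) (hB : #(rowSumMatrices A r) < B) (w : ι → ℕ)
    (hw : ∀ M ∈ rowSumMatrices A r, ∑ j, w j * ∑ i, M i j = ∑ j, w j * r → ∀ j, ∑ i, M i j = r) :
    #(semimagicSquares A r) =
      (∏ i, completeHomogeneous ((L i).map fun j => B ^ w j) r) / B ^ (∑ j, w j * r) % B := by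
  rw [prod_completeHomogeneous_eq_sum_rowSumMatrices hL hLA]
  simp only [← pow_mul, prod_pow_eq_pow_sum]
  rw [sum_pow_div_pow_mod _ _ hB, semimagicSquares]
  exact congrArg card <| filter_congr fun M hM => ⟨fun h => by simp only [h], hw M hM⟩

end KroneckerSubstitution

section OffDiagonal

lemma eq_zero_of_sum_pow_mul_eq_zero {n : ℕ} {d : Fin n → ℤ} {D : ℤ} (hd : ∀ j, |d j| < D)
    (hsum : ∑ j : Fin n, D ^ (j : ℕ) * d j = 0) : d = 0 := by
  induction n with
  | zero => exact Subsingleton.elim _ _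
  | succ n ih =>
    have hD : 0 < D := (abs_nonneg _).trans_lt (hd 0)
    have hHorner : d 0 + D * ∑ j : Fin n, D ^ (j : ℕ) * d j.succ = 0 := by
      simpa [Fin.sum_univ_succ, mul_sum, pow_succ', mul_assoc] using hsum
    have hd₀ : d 0 = 0 :=
      Int.eq_zero_of_abs_lt_dvd ((dvd_add_left (dvd_mul_right _ _)).1 (hHorner ▸ dvd_zero D)) (hd 0)
    rw [hd₀, zero_add, mul_eq_zero_iff_left hD.ne'] at hHorner
    have htail := ih (fun j => hd j.succ) hHorner
    ext j
    exact j.cases hd₀ (congrFun htail)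

/-- The weights `0, 1, D, D ^ 2, …`, by which a weighted sum of column sums remembers all but the
first of them as digits in base `D`. -/
def columnWeight {n : ℕ} (D : ℕ) : Fin (n + 1) → ℕ :=
  Fin.cons 0 fun j => D ^ (j : ℕ)

lemma sum_columnWeight_mul {n : ℕ} (D : ℕ) (c : Fin (n + 1) → ℕ) :
    ∑ j, columnWeight D j * c j = ∑ j : Fin n, D ^ (j : ℕ) * c j.succ := by
  simp [columnWeight, Fin.sum_univ_succ]

lemma sum_eq_of_sum_columnWeight_mul_eq {n r D : ℕ} (hrD : r < D) (hnD : n * r < D + r)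
    {M : Fin (n + 1) → Fin (n + 1) → ℕ} (hM : M ∈ rowSumMatrices univ.offDiag r)
    (hw : ∑ j, columnWeight D j * ∑ i, M i j = ∑ j : Fin (n + 1), columnWeight D j * r)
    (j : Fin (n + 1)) :
    ∑ i, M i j = r := by
  obtain ⟨hA, hrow⟩ := mem_rowSumMatrices.1 hM
  have hcol_le (j : Fin (n + 1)) : ∑ i, M i j ≤ n * r := by
    rw [← add_sum_erase univ _ (mem_univ j), hA j j (by simp), zero_add]
    exact (sum_le_card_nsmul _ _ r fun i _ => apply_le_of_mem_rowSumMatrices hM i j).trans_eq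
      (by simp)
  let d (j : Fin n) : ℤ := ((∑ i, M i j.succ : ℕ) : ℤ) - r
  have hd : d = 0 := by
    refine eq_zero_of_sum_pow_mul_eq_zero (D := D) (fun j => abs_lt.2 ?_) ?_
    · have := hcol_le j.succ
      constructor <;> lia
    · rw [sum_columnWeight_mul, sum_columnWeight_mul] at hw
      simp only [d, mul_sub, sum_sub_distrib, sub_eq_zero]
      exact_mod_cast hw
  have hsucc (j : Fin n) : ∑ i, M i j.succ = r :=
    Int.natCast_inj.1 (sub_eq_zero.1 (congrFun hd j))
  refine j.cases ?_ hsucc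
  have htotal : ∑ j, ∑ i, M i j = ∑ _ : Fin (n + 1), r := by simp only [sum_comm, hrow]
  simpa only [Fin.sum_univ_succ (n := n) (fun j => ∑ i, M i j), Fin.sum_univ_succ (fun _ => r),
    hsucc, add_left_inj] using htotal

/-- The columns of highest weight come first in each row, so that few of the multiplications in
`completeHomogeneous` involve large numbers. -/
lemma card_semimagicSquares_offDiag_eq_div_mod {n r D B : ℕ} (hrD : r < D) (hnD : n * r < D + r)
    (hB : ∏ i : Fin (n + 1), completeHomogeneous
      (((List.finRange (n + 1)).reverse.filter (· ≠ i)).map fun _ => 1) r < B) :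
    #(semimagicSquares (univ : Finset (Fin (n + 1))).offDiag r) =
      (∏ i : Fin (n + 1), completeHomogeneous
        (((List.finRange (n + 1)).reverse.filter (· ≠ i)).map fun j => B ^ columnWeight D j) r) /
        B ^ (∑ j : Fin (n + 1), columnWeight D j * r) % B := by
  have hnodup (i : Fin (n + 1)) : ((List.finRange (n + 1)).reverse.filter (· ≠ i)).Nodup :=
    (List.nodup_reverse.2 (List.nodup_finRange _)).filter _
  have hmem (i j : Fin (n + 1)) :
      j ∈ (List.finRange (n + 1)).reverse.filter (· ≠ i) ↔ (i, j) ∈ univ.offDiag := by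
    simp [ne_comm]
  rw [← card_rowSumMatrices hnodup hmem] at hB
  exact card_semimagicSquares_eq_div_mod hnodup hmem hB _ fun M hM hw =>
    sum_eq_of_sum_columnWeight_mul_eq hrD hnD hM hw

lemma S_eq_card_semimagicSquares (n r : ℕ) :
    S n r = #(semimagicSquares (univ : Finset (Fin n)).offDiag r) := by
  rw [S, ← Nat.card_eq_finsetCard]
  refine Nat.card_congr (Equiv.subtypeEquiv Matrix.of.symm fun M => ?_)
  simp [mem_semimagicSquares]

lemma cellMatrix_offDiag_mem (ι : Type*) [DecidableEq ι] [Fintype ι] :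
    cellMatrix univ.offDiag ∈ semimagicSquares (univ : Finset ι).offDiag (Fintype.card ι - 1) := by
  refine mem_semimagicSquares.2 ⟨fun i j h => if_neg h, fun i => ?_, fun j => ?_⟩
  · simp [cellMatrix, sum_ite, filter_ne]
  · simp [cellMatrix, sum_ite, filter_ne']

end OffDiagonal

section FiveTeams

/-- The polynomial `241920 * S_5`. -/
noncomputable def fiveTeamPolynomial : ℚ[X] :=
  (X + 1) * (X + 2) * (X + 3) *
    (43 * X ^ 8 + 688 * X ^ 7 + 4934 * X ^ 6 + 20680 * X ^ 5 + 55907 * X ^ 4 +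
      101272 * X ^ 3 + 123436 * X ^ 2 + 96240 * X + 40320)

lemma natDegree_fiveTeamPolynomial_le : fiveTeamPolynomial.natDegree ≤ 11 := by
  unfold fiveTeamPolynomial
  compute_degree

set_option maxRecDepth 10000 in
-- At most `165 ^ 5 < 2 ^ 37` matrices have the required row sums, and the deviation of a column sum
-- from `r` lies between `-r` and `3 * r`.
lemma eval_fiveTeamPolynomial_of_lt_nine {r : ℕ} (hr : r < 9) :
    fiveTeamPolynomial.eval (r : ℚ) = 241920 * S 5 r := by
  rw [S_eq_card_semimagicSquares, card_semimagicSquares_offDiag_eq_div_mod (D := 3 * r + 1)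
    (B := 2 ^ 37) (by lia) (by lia) (by decide +kernel +revert)]
  simp only [fiveTeamPolynomial, eval_mul, eval_add, eval_pow, eval_X, eval_one, eval_ofNat]
  norm_cast
  decide +kernel +revert

lemma eval_neg_fiveTeamPolynomial {j : ℕ} (hj : 0 < j) (hj₃ : j ≤ 3) :
    fiveTeamPolynomial.eval (-j : ℚ) = 0 := by
  interval_cases j <;> norm_num [fiveTeamPolynomial]

end FiveTeams

theorem S_five (r : ℕ) :
    241920 * S 5 r =
      (r + 1) * (r + 2) * (r + 3) *
        (43 * r ^ 8 + 688 * r ^ 7 + 4934 * r ^ 6 + 20680 * r ^ 5 + 55907 * r ^ 4 +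
          101272 * r ^ 3 + 123436 * r ^ 2 + 96240 * r + 40320) := by
  have hfull := cellMatrix_offDiag_mem (Fin 5)
  obtain ⟨p, hp⟩ := exists_eval_eq_card_semimagicSquares hfull (by decide)
  have hdeg : p.natDegree ≤ 11 := natDegree_le_of_eval_eq_card_semimagicSquares_offDiag
    (a := 0) (b := 1) (l := 4) (by decide) (by decide) (by decide) hp
  have hpoly : C 241920 * p = fiveTeamPolynomial := by
    refine eq_of_natDegree_lt_of_eval_intCast_eq (m := 3) (n := 9)
      (((natDegree_C_mul_le _ _).trans hdeg).trans_lt (by decide))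
      (natDegree_fiveTeamPolynomial_le.trans_lt (by decide)) (fun j hj hj₃ => ?_) fun s hs => ?_
    · rw [eval_mul, eval_neg_eq_zero_of_cellMatrix_mem hp hfull hj (Nat.lt_succ_of_le hj₃),
        mul_zero, eval_neg_fiveTeamPolynomial hj hj₃]
    · rw [eval_mul, eval_C, ← hp, eval_fiveTeamPolynomial_of_lt_nine hs,
        S_eq_card_semimagicSquares]
  have heval := congrArg (eval (r : ℚ)) hpoly
  rw [eval_mul, eval_C, ← hp, ← S_eq_card_semimagicSquares] at heval
  simp only [fiveTeamPolynomial, eval_mul, eval_add, eval_pow, eval_X, eval_one,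
    eval_ofNat] at heval
  exact_mod_cast heval
end

section
/- For every fixed integer n ≥ 3 there exists a polynomial P with rational coefficients of degree n² − 3n + 1 such that P(r) = S_n(r) for every natural number r. -/
/-!
Polynomiality. Let `σ` be a permutation whose graph avoids the forbidden positions `Z`. Among the
nonnegative matrices with line sum `r + 1` vanishing on `Z`, those that are positive along the
graph of `σ` are obtained by adding the permutation matrix of `σ` to one with line sum `r`; the
others vanish at one more position, and inclusion-exclusion counts them through strictly larger
forbidden sets. By induction on the complement of `Z` the first difference of the count is a
polynomial, so the count is one too. If no permutation avoids `Z`, Birkhoff's theorem shows that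
the count vanishes for `r ≥ 1`; it is `1` at `r = 0`, and for this reason the inductive statement
only concerns `r ≥ 1`.

Degree. A matrix with zero diagonal is determined by its line sum and its `d = n² - 3n + 1` entries
outside one row, one column, the diagonal and one further position, so the count is at most
`(r + 1) ^ d`. Conversely, prescribing these entries arbitrarily in `{0, …, k}` and adding a large
multiple of the matrix with all off-diagonal entries `1` yields `(k + 1) ^ d` matrices whose line
sum is a fixed multiple of `k`.
-/

open Asymptotics Filter Finset Polynomial

section PolynomialSequences

theorem degree_le_degree_of_isBigO_eval {α 𝕜 : Type*} [NormedField 𝕜] [LinearOrder 𝕜]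
    [IsStrictOrderedRing 𝕜] [OrderTopology 𝕜] {l : Filter α} [l.NeBot] {x : α → 𝕜}
    (hx : Tendsto x l atTop) {P Q : 𝕜[X]}
    (h : (fun a => P.eval (x a)) =O[l] fun a => Q.eval (x a)) : P.degree ≤ Q.degree := by
  by_contra! hlt
  have hP : P ≠ 0 := by rintro rfl; simp at hlt
  have hne : ∀ᶠ a in l, P.eval (x a) ≠ 0 := hx.eventually (eventually_atTop_not_isRoot P hP)
  exact isLittleO_irrefl hne.frequently
    (h.trans_isLittleO ((isLittleO_atTop_of_degree_lt _ _ hlt).comp_tendsto hx))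

theorem degree_eq_of_pow_le_of_le_pow {P : ℚ[X]} {c d : ℕ} (hc : 0 < c)
    (hle : ∀ r : ℕ, P.eval (r : ℚ) ≤ (r + 1) ^ d) (hnonneg : ∀ r : ℕ, 0 ≤ P.eval (r : ℚ))
    (hge : ∀ k : ℕ, ((k : ℚ) + 1) ^ d ≤ P.eval ((c * k : ℕ) : ℚ)) : P.degree = d := by
  have hdeg : ((X + 1 : ℚ[X]) ^ d).degree = d := by
    rw [degree_pow, ← C_1, degree_X_add_C, nsmul_one]
  have heval (x : ℚ) : ((X + 1 : ℚ[X]) ^ d).eval x = (x + 1) ^ d := by simp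
  rw [← hdeg]
  apply le_antisymm
  · refine degree_le_degree_of_isBigO_eval (tendsto_natCast_atTop_atTop (R := ℚ))
      (IsBigO.of_bound' (.of_forall fun r => norm_le_norm_of_abs_le_abs ?_))
    rw [heval, abs_of_nonneg (hnonneg r), abs_of_nonneg (by positivity)]
    exact hle r
  · have htendsto : Tendsto (fun k : ℕ => ((c * k : ℕ) : ℚ)) atTop atTop :=
      tendsto_natCast_atTop_atTop.comp (tendsto_id.const_mul_atTop' hc)
    refine degree_le_degree_of_isBigO_eval htendsto ?_
    have hscale (k : ℕ) : ((c * k : ℕ) + 1 : ℚ) ^ d ≤ c ^ d * P.eval ((c * k : ℕ) : ℚ) :=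
      calc ((c * k : ℕ) + 1 : ℚ) ^ d ≤ (c * (k + 1)) ^ d := by
            have : (1 : ℚ) ≤ c := by exact_mod_cast hc
            push_cast
            gcongr
            linarith
        _ = c ^ d * (k + 1) ^ d := mul_pow _ _ _
        _ ≤ c ^ d * P.eval ((c * k : ℕ) : ℚ) := by gcongr; exact hge k
    refine IsBigO.trans (IsBigO.of_bound' (.of_forall fun k => norm_le_norm_of_abs_le_abs ?_))
      (isBigO_const_mul_self ((c : ℚ) ^ d) _ _)
    rw [heval, abs_of_nonneg (by positivity),
      abs_of_nonneg (mul_nonneg (by positivity) (hnonneg (c * k)))]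
    exact hscale k

theorem exists_polynomial_eval_eq_sum_range (P : ℚ[X]) :
    ∃ Q : ℚ[X], ∀ r : ℕ, Q.eval (r : ℚ) = ∑ s ∈ range r, P.eval (s : ℚ) := by
  induction P using Polynomial.induction_on' with
  | add P₁ P₂ h₁ h₂ =>
    obtain ⟨Q₁, hQ₁⟩ := h₁
    obtain ⟨Q₂, hQ₂⟩ := h₂
    exact ⟨Q₁ + Q₂, fun r => by simp only [eval_add, hQ₁, hQ₂, sum_add_distrib]⟩
  | monomial m a =>
    refine ⟨C (a / (m + 1)) * (Polynomial.bernoulli m.succ - C (_root_.bernoulli m.succ)),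
      fun r => ?_⟩
    simp only [eval_mul, eval_C, eval_sub, eval_monomial, ← mul_sum]
    rw [← sum_range_pow_eq_bernoulli_sub]
    field_simp

/-- The sequence `f` is given by a polynomial at all natural numbers `r ≥ N`. -/
def IsPolynomialFrom (N : ℕ) (f : ℕ → ℚ) : Prop :=
  ∃ P : ℚ[X], ∀ r, N ≤ r → P.eval (r : ℚ) = f r

namespace IsPolynomialFrom

variable {N : ℕ} {f g : ℕ → ℚ}

theorem sum_const_mul {κ : Type*} {s : Finset κ} (a : κ → ℚ) {F : κ → ℕ → ℚ}
    (h : ∀ t ∈ s, IsPolynomialFrom N (F t)) :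
    IsPolynomialFrom N fun r => ∑ t ∈ s, a t * F t r := by
  choose! P hP using h
  refine ⟨∑ t ∈ s, C (a t) * P t, fun r hr => ?_⟩
  rw [eval_finsetSum]
  exact sum_congr rfl fun t ht => by rw [eval_C_mul, hP t ht r hr]

theorem comp_succ (h : IsPolynomialFrom (N + 1) f) : IsPolynomialFrom N fun r => f (r + 1) := by
  obtain ⟨P, hP⟩ := h
  refine ⟨P.comp (X + 1), fun r hr => ?_⟩
  simp [← hP (r + 1) (by lia)]

theorem of_succ_eq_add (hg : IsPolynomialFrom N g) (h : ∀ r, N ≤ r → f (r + 1) = f r + g r) :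
    IsPolynomialFrom N f := by
  obtain ⟨P, hP⟩ := hg
  obtain ⟨Q, hQ⟩ := exists_polynomial_eval_eq_sum_range P
  refine ⟨C (f N - Q.eval (N : ℚ)) + Q, fun r hr => ?_⟩
  rw [eval_add, eval_C]
  induction r, hr using Nat.le_induction with
  | base => exact sub_add_cancel _ _
  | succ r hr ih =>
    have hQ_succ : Q.eval ((r + 1 : ℕ) : ℚ) = Q.eval (r : ℚ) + g r := by
      rw [hQ, hQ, sum_range_succ, hP r hr]
    rw [hQ_succ, ← add_assoc, ih, h r hr]

end IsPolynomialFrom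

end PolynomialSequences

section LineSum

variable {ι R : Type*} [Fintype ι]

/-- All row sums and all column sums of the square matrix `M` are equal to `r`. -/
structure HasLineSum [AddCommMonoid R] (M : Matrix ι ι R) (r : R) : Prop where
  row (i : ι) : ∑ j, M i j = r
  col (j : ι) : ∑ i, M i j = r

theorem hasLineSum_iff [AddCommMonoid R] {M : Matrix ι ι R} {r : R} :
    HasLineSum M r ↔ (∀ i, ∑ j, M i j = r) ∧ ∀ j, ∑ i, M i j = r :=
  ⟨fun h => ⟨h.row, h.col⟩, fun h => ⟨h.1, h.2⟩⟩

namespace HasLineSum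

theorem map_iff {R' : Type*} [AddCommMonoid R] [AddCommMonoid R'] {f : R →+ R'}
    (hf : Function.Injective f) {M : Matrix ι ι R} {r : R} :
    HasLineSum (M.map f) (f r) ↔ HasLineSum M r := by
  simp only [hasLineSum_iff, Matrix.map_apply, ← map_sum, hf.eq_iff]

theorem add [AddCommMonoid R] {M N : Matrix ι ι R} {r s : R} (hM : HasLineSum M r)
    (hN : HasLineSum N s) : HasLineSum (M + N) (r + s) where
  row i := by simp only [Matrix.add_apply, sum_add_distrib, hM.row, hN.row]
  col j := by simp only [Matrix.add_apply, sum_add_distrib, hM.col, hN.col]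

theorem add_iff_left [AddCancelCommMonoid R] {M N : Matrix ι ι R} {r s : R}
    (hN : HasLineSum N s) : HasLineSum (M + N) (r + s) ↔ HasLineSum M r := by
  simp only [hasLineSum_iff, Matrix.add_apply, sum_add_distrib, hN.row, hN.col, add_left_inj]

theorem sub [AddCommGroup R] {M N : Matrix ι ι R} {r s : R} (hM : HasLineSum M r)
    (hN : HasLineSum N s) : HasLineSum (M - N) (r - s) where
  row i := by simp only [Matrix.sub_apply, sum_sub_distrib, hM.row, hN.row]
  col j := by simp only [Matrix.sub_apply, sum_sub_distrib, hM.col, hN.col]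

theorem const_smul [NonUnitalNonAssocSemiring R] {M : Matrix ι ι R} {r : R} (hM : HasLineSum M r)
    (c : R) : HasLineSum (c • M) (c * r) where
  row i := by simp only [Matrix.smul_apply, smul_eq_mul, ← mul_sum, hM.row]
  col j := by simp only [Matrix.smul_apply, smul_eq_mul, ← mul_sum, hM.col]

theorem sum [AddCommMonoid R] {κ : Type*} {s : Finset κ} {M : κ → Matrix ι ι R} {r : κ → R}
    (hM : ∀ t ∈ s, HasLineSum (M t) (r t)) : HasLineSum (∑ t ∈ s, M t) (∑ t ∈ s, r t) where
  row i := by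
    simp only [Matrix.sum_apply]
    rw [sum_comm]
    exact sum_congr rfl fun t ht => (hM t ht).row i
  col j := by
    simp only [Matrix.sum_apply]
    rw [sum_comm]
    exact sum_congr rfl fun t ht => (hM t ht).col j

theorem permMatrix [DecidableEq ι] [NonAssocSemiring R] (σ : Equiv.Perm ι) :
    HasLineSum (σ.permMatrix R) 1 where
  row i := by simp [PEquiv.toMatrix_apply]
  col j := by simp [PEquiv.toMatrix_apply, ← Equiv.eq_symm_apply]

theorem vecMulVec_zero [NonUnitalNonAssocSemiring R] {a b : ι → R} (ha : ∑ i, a i = 0)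
    (hb : ∑ j, b j = 0) : HasLineSum (Matrix.vecMulVec a b) 0 where
  row i := by simp only [Matrix.vecMulVec_apply, ← mul_sum, hb, mul_zero]
  col j := by simp only [Matrix.vecMulVec_apply, ← sum_mul, ha, zero_mul]

theorem exists_perm_forall_ne_zero [Field R] [LinearOrder R] [IsStrictOrderedRing R]
    {M : Matrix ι ι R} {r : R} (hM : HasLineSum M r) (hr : 0 < r) (hnonneg : ∀ i j, 0 ≤ M i j) :
    ∃ σ : Equiv.Perm ι, ∀ i, M i (σ i) ≠ 0 := by
  classical
  obtain ⟨D, hD, rfl⟩ := (exists_mem_doublyStochastic_eq_smul_iff hr.le).2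
    ⟨hnonneg, hM.row, hM.col⟩
  obtain ⟨w, hw_nonneg, hw_sum, rfl⟩ := exists_eq_sum_perm_of_mem_doublyStochastic hD
  obtain ⟨σ, -, hσ⟩ := exists_ne_zero_of_sum_ne_zero (hw_sum.trans_ne one_ne_zero)
  refine ⟨σ, fun i => (mul_pos hr ?_).ne'⟩
  have hterm (τ : Equiv.Perm ι) : 0 ≤ (w τ • τ.permMatrix R) i (σ i) :=
    mul_nonneg (hw_nonneg τ) (nonneg_of_mem_doublyStochastic permMatrix_mem_doublyStochastic)
  rw [Matrix.sum_apply]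
  refine sum_pos' (fun τ _ => hterm τ) ⟨σ, mem_univ σ, ?_⟩
  simpa [PEquiv.toMatrix_apply] using (hw_nonneg σ).lt_of_ne' hσ

end HasLineSum

end LineSum

section SemiMagic

variable {ι : Type*} [Fintype ι] [DecidableEq ι]

/-- The square matrices of natural numbers with all line sums `r` (the semi-magic squares) that
vanish at the positions in `Z`. -/
def semiMagic (Z : Finset (ι × ι)) (r : ℕ) : Finset (Matrix ι ι ℕ) :=
  {M ∈ (Fintype.piFinset fun _ => piAntidiag univ r).map Matrix.of.toEmbedding |
    (∀ p ∈ Z, M p.1 p.2 = 0) ∧ ∀ j, ∑ i, M i j = r}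

variable {Z : Finset (ι × ι)} {r : ℕ} {M : Matrix ι ι ℕ} {σ : Equiv.Perm ι}

theorem mem_semiMagic : M ∈ semiMagic Z r ↔ (∀ p ∈ Z, M p.1 p.2 = 0) ∧ HasLineSum M r := by
  have hrow (i : ι) : univ.sum (Matrix.of.symm M i) = ∑ j, M i j := rfl
  simp [semiMagic, hasLineSum_iff, and_left_comm, mem_map_equiv, hrow]

theorem S_eq_card_semiMagic (n r : ℕ) : S n r = #(semiMagic (univ : Finset (Fin n)).diag r) :=
  Nat.subtype_card _ fun M => by simp [mem_semiMagic, hasLineSum_iff]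

/-- The positions of the ones of the permutation matrix of `σ`. -/
def permGraph (σ : Equiv.Perm ι) : Finset (ι × ι) :=
  univ.image fun i => (i, σ i)

theorem mem_permGraph {p : ι × ι} : p ∈ permGraph σ ↔ σ p.1 = p.2 := by
  simp [permGraph, Prod.ext_iff]

theorem permMatrix_apply_eq_ite (i j : ι) :
    σ.permMatrix ℕ i j = if (i, j) ∈ permGraph σ then 1 else 0 := by
  simp [mem_permGraph, PEquiv.toMatrix_apply]

theorem exists_perm_disjoint_permGraph (hM : M ∈ semiMagic Z r) (hr : 0 < r) :
    ∃ σ : Equiv.Perm ι, Disjoint Z (permGraph σ) := by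
  obtain ⟨hzero, hsum⟩ := mem_semiMagic.1 hM
  have hsumℚ : HasLineSum (M.map (Nat.castAddMonoidHom ℚ)) (r : ℚ) :=
    (HasLineSum.map_iff Nat.cast_injective).2 hsum
  obtain ⟨σ, hσ⟩ := hsumℚ.exists_perm_forall_ne_zero (by exact_mod_cast hr)
    fun i j => Nat.cast_nonneg (M i j)
  refine ⟨σ, Finset.disjoint_left.2 fun p hpZ hpσ => hσ p.1 ?_⟩
  rw [mem_permGraph.1 hpσ]
  simp [hzero p hpZ]

theorem add_permMatrix_mem_semiMagic_iff (hσ : Disjoint Z (permGraph σ)) :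
    M + σ.permMatrix ℕ ∈ semiMagic Z (r + 1) ↔ M ∈ semiMagic Z r := by
  rw [mem_semiMagic, mem_semiMagic, HasLineSum.add_iff_left (.permMatrix σ)]
  refine and_congr_left' (forall₂_congr fun p hp => ?_)
  rw [Matrix.add_apply, permMatrix_apply_eq_ite, if_neg (Finset.disjoint_left.1 hσ hp), add_zero]

theorem filter_semiMagic_succ_ne_zero (hσ : Disjoint Z (permGraph σ)) (r : ℕ) :
    {M ∈ semiMagic Z (r + 1) | ∀ p ∈ permGraph σ, M p.1 p.2 ≠ 0} =
      (semiMagic Z r).map (addRightEmbedding (σ.permMatrix ℕ)) := by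
  ext M
  simp only [mem_filter, Finset.mem_map, addRightEmbedding_apply]
  constructor
  · rintro ⟨hM, hpos⟩
    have hsub : M - σ.permMatrix ℕ + σ.permMatrix ℕ = M := by
      ext i j
      rw [Matrix.add_apply, Matrix.sub_apply, permMatrix_apply_eq_ite]
      split_ifs with hij
      · exact Nat.sub_add_cancel (Nat.one_le_iff_ne_zero.2 (hpos _ hij))
      · rfl
    exact ⟨_, (add_permMatrix_mem_semiMagic_iff hσ).1 (hsub.symm ▸ hM), hsub⟩
  · rintro ⟨M, hM, rfl⟩
    refine ⟨(add_permMatrix_mem_semiMagic_iff hσ).2 hM, fun p hp => ?_⟩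
    rw [Matrix.add_apply, permMatrix_apply_eq_ite, if_pos hp]
    exact Nat.succ_ne_zero _

theorem biUnion_semiMagic_insert (Z T : Finset (ι × ι)) (r : ℕ) :
    (T.biUnion fun p => semiMagic (insert p Z) r) =
      {M ∈ semiMagic Z r | ¬ ∀ p ∈ T, M p.1 p.2 ≠ 0} := by
  ext M
  simp only [mem_biUnion, mem_filter, mem_semiMagic, forall_mem_insert]
  push Not
  tauto

theorem card_semiMagic_succ (hσ : Disjoint Z (permGraph σ)) (r : ℕ) :
    #(semiMagic Z (r + 1)) =
      #(semiMagic Z r) + #((permGraph σ).biUnion fun p => semiMagic (insert p Z) (r + 1)) := by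
  rw [biUnion_semiMagic_insert,
    ← card_filter_add_card_filter_not fun M : Matrix ι ι ℕ => ∀ p ∈ permGraph σ, M p.1 p.2 ≠ 0,
    filter_semiMagic_succ_ne_zero hσ, card_map]

theorem inf'_semiMagic_insert (Z : Finset (ι × ι)) (r : ℕ) {T : Finset (ι × ι)}
    (hT : T.Nonempty) :
    (T.inf' hT fun p => semiMagic (insert p Z) r) = semiMagic (Z ∪ T) r := by
  ext M
  simp only [mem_inf', mem_semiMagic, forall_mem_insert, forall_mem_union]
  refine ⟨fun h => ?_, fun h p hp => ⟨⟨h.1.2 p hp, h.1.1⟩, h.2⟩⟩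
  obtain ⟨q, hq⟩ := hT
  exact ⟨⟨(h q hq).1.2, fun p hp => (h p hp).1.1⟩, (h q hq).2⟩

theorem card_biUnion_semiMagic_insert (Z T : Finset (ι × ι)) (r : ℕ) :
    (#(T.biUnion fun p => semiMagic (insert p Z) r) : ℚ) =
      ∑ t ∈ T.powerset with t.Nonempty, (-1) ^ (#t + 1) * (#(semiMagic (Z ∪ t) r) : ℚ) := by
  have h := inclusion_exclusion_card_biUnion T fun p => semiMagic (insert p Z) r
  simp only [inf'_semiMagic_insert] at h
  rw [sum_coe_sort _ fun t => (-1 : ℤ) ^ (#t + 1) * (#(semiMagic (Z ∪ t) r) : ℤ)] at h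
  exact_mod_cast congrArg (Int.cast : ℤ → ℚ) h

theorem isPolynomialFrom_zero_of_forall_ssuperset (hσ : Disjoint Z (permGraph σ))
    (ih : ∀ Z', Z ⊂ Z' → IsPolynomialFrom 1 fun r => #(semiMagic Z' r)) :
    IsPolynomialFrom 0 fun r => #(semiMagic Z r) := by
  have hdiff : IsPolynomialFrom 1 fun r =>
      (#((permGraph σ).biUnion fun p => semiMagic (insert p Z) r) : ℚ) := by
    simp only [card_biUnion_semiMagic_insert]
    refine .sum_const_mul _ fun t ht => ih _ ?_
    obtain ⟨htσ, p, hp⟩ := mem_filter.1 ht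
    have hpZ : p ∉ Z := Finset.disjoint_right.1 hσ (mem_powerset.1 htσ hp)
    exact Finset.ssubset_iff_subset_ne.2
      ⟨subset_union_left, fun h => hpZ (h ▸ mem_union_right _ hp)⟩
  exact hdiff.comp_succ.of_succ_eq_add fun r _ => by exact_mod_cast card_semiMagic_succ hσ r

theorem isPolynomialFrom_one_card_semiMagic (Z : Finset (ι × ι)) :
    IsPolynomialFrom 1 fun r => #(semiMagic Z r) := by
  induction Z using WellFoundedGT.induction with
  | ind Z ih =>
    by_cases hZ : ∃ σ : Equiv.Perm ι, Disjoint Z (permGraph σ)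
    · obtain ⟨σ, hσ⟩ := hZ
      obtain ⟨P, hP⟩ := isPolynomialFrom_zero_of_forall_ssuperset hσ ih
      exact ⟨P, fun r _ => hP r r.zero_le⟩
    · refine ⟨0, fun r hr => ?_⟩
      have hempty : semiMagic Z r = ∅ :=
        eq_empty_of_forall_notMem fun M hM => hZ (exists_perm_disjoint_permGraph hM hr)
      simp [hempty]

theorem isPolynomialFrom_zero_card_semiMagic (hσ : Disjoint Z (permGraph σ)) :
    IsPolynomialFrom 0 fun r => #(semiMagic Z r) :=
  isPolynomialFrom_zero_of_forall_ssuperset hσ fun Z' _ => isPolynomialFrom_one_card_semiMagic Z'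

end SemiMagic

section FreePositions

variable {ι R : Type*} [Fintype ι]

theorem eq_of_sum_eq_of_forall_ne [AddCancelCommMonoid R] {f g : ι → R} {a : ι}
    (hsum : ∑ i, f i = ∑ i, g i) (h : ∀ i, i ≠ a → f i = g i) : f a = g a := by
  classical
  rw [← add_sum_erase _ f (mem_univ a), ← add_sum_erase _ g (mem_univ a),
    sum_congr rfl fun i hi => h i (ne_of_mem_erase hi)] at hsum
  exact add_right_cancel hsum

variable [DecidableEq ι]

/-- The off-diagonal positions outside row `u` and column `u`, except `(v, w)`. The entries there
are free coordinates on the matrices with zero diagonal and prescribed line sum. -/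
def freePositions (u v w : ι) : Finset (ι × ι) :=
  (univ.erase u).offDiag.erase (v, w)

variable {u v w : ι}

theorem mem_freePositions {p : ι × ι} :
    p ∈ freePositions u v w ↔ p ≠ (v, w) ∧ p.1 ≠ u ∧ p.2 ≠ u ∧ p.1 ≠ p.2 := by
  simp [freePositions, mem_offDiag]

theorem card_freePositions (huv : u ≠ v) (huw : u ≠ w) (hvw : v ≠ w) :
    #(freePositions u v w) = Fintype.card ι ^ 2 - 3 * Fintype.card ι + 1 := by
  have hmem : (v, w) ∈ (univ.erase u).offDiag := by simp [huv.symm, huw.symm, hvw]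
  have hcard : 2 < Fintype.card ι := Fintype.two_lt_card_iff.2 ⟨u, v, w, huv, huw, hvw⟩
  obtain ⟨m, hm⟩ := Nat.exists_eq_add_of_le' hcard
  rw [freePositions, card_erase_of_mem hmem, offDiag_card, card_erase_of_mem (mem_univ u),
    card_univ, hm, Nat.add_sub_cancel_right (m + 2) 1]
  rw [show (m + 3) ^ 2 = (m + 2) * (m + 2) + 2 * m + 5 by ring]
  lia

theorem HasLineSum.ext_of_freePositions [AddCancelCommMonoid R] {M N : Matrix ι ι R} {r : R}
    (hM : HasLineSum M r) (hN : HasLineSum N r) (huv : u ≠ v) (hdiag : ∀ i, M i i = N i i)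
    (hfree : ∀ p ∈ freePositions u v w, M p.1 p.2 = N p.1 p.2) : M = N := by
  have row_ext (i k : ι) (h : ∀ j, j ≠ k → M i j = N i j) : M i k = N i k :=
    eq_of_sum_eq_of_forall_ne ((hM.row i).trans (hN.row i).symm) h
  have col_ext (j k : ι) (h : ∀ i, i ≠ k → M i j = N i j) : M k j = N k j :=
    eq_of_sum_eq_of_forall_ne (f := (M · j)) ((hM.col j).trans (hN.col j).symm) h
  have off_u (i j : ι) (hi : i ≠ u) (hj : j ≠ u) (hij : (i, j) ≠ (v, w)) : M i j = N i j := by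
    obtain rfl | hne := eq_or_ne i j
    · exact hdiag i
    · exact hfree (i, j) (mem_freePositions.2 ⟨hij, hi, hj, hne⟩)
  have col_u_of_ne (i : ι) (hi : i ≠ v) : M i u = N i u := by
    obtain rfl | hiu := eq_or_ne i u
    · exact hdiag i
    · exact row_ext i u fun j hj => off_u i j hiu hj (by simp [hi])
  have col_u (i : ι) : M i u = N i u := by
    obtain rfl | hi := eq_or_ne i v
    · exact col_ext u i col_u_of_ne
    · exact col_u_of_ne i hi
  have entry_vw : M v w = N v w := row_ext v w fun j hj => by
    obtain rfl | hju := eq_or_ne j u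
    · exact col_u v
    · exact off_u v j huv.symm hju (by simp [hj])
  have row_ne_u (i j : ι) (hi : i ≠ u) : M i j = N i j := by
    obtain rfl | hj := eq_or_ne j u
    · exact col_u i
    by_cases hij : (i, j) = (v, w)
    · obtain ⟨rfl, rfl⟩ := Prod.mk.inj hij
      exact entry_vw
    · exact off_u i j hi hj hij
  ext i j
  obtain rfl | hi := eq_or_ne i u
  · exact col_ext j i fun k hk => row_ne_u k j hk
  · exact row_ne_u i j hi

theorem card_semiMagic_diag_le (huv : u ≠ v) (w : ι) (r : ℕ) :
    #(semiMagic (univ : Finset ι).diag r) ≤ (r + 1) ^ #(freePositions u v w) := by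
  have hle (M : semiMagic (univ : Finset ι).diag r) (i j : ι) : M.1 i j < r + 1 := by
    rw [Nat.lt_succ_iff]
    exact (single_le_sum_of_canonicallyOrdered (f := M.1 i) (mem_univ j)).trans_eq
      ((mem_semiMagic.1 M.2).2.row i)
  have hinj : Function.Injective fun (M : semiMagic (univ : Finset ι).diag r)
      (p : freePositions u v w) => (⟨M.1 p.1.1 p.1.2, hle M _ _⟩ : Fin (r + 1)) := by
    intro M N hMN
    obtain ⟨hM_diag, hM⟩ := mem_semiMagic.1 M.2
    obtain ⟨hN_diag, hN⟩ := mem_semiMagic.1 N.2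
    refine Subtype.ext (hM.ext_of_freePositions (w := w) hN huv (fun i => ?_) fun p hp => ?_)
    · rw [hM_diag (i, i) (by simp), hN_diag (i, i) (by simp)]
    · exact congrArg Fin.val (congrFun hMN ⟨p, hp⟩)
  simpa using Fintype.card_le_of_injective _ hinj

end FreePositions

section Exchange

variable {ι R : Type*} [Fintype ι] [DecidableEq ι]

/-- For distinct `u`, `v`, `w` and a free position `p`, the matrix with line sum `0` and zero
diagonal whose only nonzero entry among the free positions is a `1` at `p`. The first product
corrects the row and column sums through row and column `u`; the second one restores the entry `0`
at `(u, u)`. -/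
def exchange (u v w : ι) (p : ι × ι) : Matrix ι ι ℤ :=
  Matrix.vecMulVec (Pi.single p.1 1 - Pi.single u 1) (Pi.single p.2 1 - Pi.single u 1) -
    Matrix.vecMulVec (Pi.single v 1 - Pi.single u 1) (Pi.single w 1 - Pi.single u 1)

variable {u v w : ι} {p : ι × ι}

theorem hasLineSum_exchange (u v w : ι) (p : ι × ι) : HasLineSum (exchange u v w p) 0 := by
  have hsum (a : ι) : ∑ i, (Pi.single a 1 - Pi.single u 1 : ι → ℤ) i = 0 := by simp
  simpa [exchange] using (HasLineSum.vecMulVec_zero (hsum p.1) (hsum p.2)).sub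
    (HasLineSum.vecMulVec_zero (hsum v) (hsum w))

theorem exchange_apply_self (huv : u ≠ v) (huw : u ≠ w) (hvw : v ≠ w)
    (hp : p ∈ freePositions u v w) (i : ι) : exchange u v w p i i = 0 := by
  rw [mem_freePositions] at hp
  simp only [exchange, Matrix.sub_apply, Matrix.vecMulVec_apply, Pi.sub_apply, Pi.single_apply]
  grind

theorem neg_one_le_exchange_apply (huv : u ≠ v) (huw : u ≠ w)
    (hp : p ∈ freePositions u v w) (i j : ι) : -1 ≤ exchange u v w p i j := by
  rw [mem_freePositions] at hp
  simp only [exchange, Matrix.sub_apply, Matrix.vecMulVec_apply, Pi.sub_apply, Pi.single_apply]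
  grind

theorem exchange_apply_of_mem {q : ι × ι} (hq : q ∈ freePositions u v w) :
    exchange u v w p q.1 q.2 = if p = q then 1 else 0 := by
  rw [mem_freePositions] at hq
  simp only [exchange, Matrix.sub_apply, Matrix.vecMulVec_apply, Pi.sub_apply, Pi.single_apply]
  grind

/-- For distinct `u`, `v`, `w`, the matrix with line sum `0` and zero diagonal whose entries at the
free positions are `x`. -/
def exchangeSum (x : freePositions u v w → ℤ) : Matrix ι ι ℤ :=
  ∑ p, x p • exchange u v w p

theorem hasLineSum_exchangeSum (x : freePositions u v w → ℤ) : HasLineSum (exchangeSum x) 0 := by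
  simpa [exchangeSum] using HasLineSum.sum fun p (_ : p ∈ univ) =>
    (hasLineSum_exchange u v w p.1).const_smul (x p)

theorem exchangeSum_apply (x : freePositions u v w → ℤ) (i j : ι) :
    exchangeSum x i j = ∑ p, x p * exchange u v w p i j := by
  simp only [exchangeSum, Matrix.sum_apply, Matrix.smul_apply, smul_eq_mul]

theorem exchangeSum_apply_self (huv : u ≠ v) (huw : u ≠ w) (hvw : v ≠ w)
    (x : freePositions u v w → ℤ) (i : ι) : exchangeSum x i i = 0 := by
  simp [exchangeSum_apply, exchange_apply_self huv huw hvw]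

theorem neg_sum_le_exchangeSum_apply (huv : u ≠ v) (huw : u ≠ w)
    {x : freePositions u v w → ℤ} (hx : 0 ≤ x) (i j : ι) : -∑ p, x p ≤ exchangeSum x i j := by
  rw [exchangeSum_apply, ← sum_neg_distrib]
  refine sum_le_sum fun p _ => ?_
  simpa using mul_le_mul_of_nonneg_left (neg_one_le_exchange_apply huv huw p.2 i j) (hx p)

theorem exchangeSum_apply_coe (x : freePositions u v w → ℤ) (q : freePositions u v w) :
    exchangeSum x q.1.1 q.1.2 = x q := by
  simp [exchangeSum_apply, exchange_apply_of_mem q.2]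

theorem hasLineSum_ones_sub_one [Ring R] :
    HasLineSum (Matrix.of (fun _ _ => 1) - 1 : Matrix ι ι R) (Fintype.card ι - 1) where
  row i := by simp [Matrix.one_apply]
  col j := by simp [Matrix.one_apply]

theorem map_toNat_mem_semiMagic {Z : Finset (ι × ι)} {r : ℕ} {A : Matrix ι ι ℤ}
    (hA : HasLineSum A r) (hnonneg : ∀ i j, 0 ≤ A i j) (hzero : ∀ p ∈ Z, A p.1 p.2 = 0) :
    A.map Int.toNat ∈ semiMagic Z r := by
  have hcast : (A.map Int.toNat).map (Nat.castAddMonoidHom ℤ) = A := by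
    ext i j
    simpa using hnonneg i j
  refine mem_semiMagic.2 ⟨fun p hp => by simp [hzero p hp], ?_⟩
  rw [← HasLineSum.map_iff (f := Nat.castAddMonoidHom ℤ) Nat.cast_injective, hcast]
  exact hA

/-- The translate of `exchangeSum x` by the matrix with off-diagonal entries `K`, which is
nonnegative once `∑ p, x p ≤ K`. -/
def shiftedExchangeSum (K : ℤ) (x : freePositions u v w → ℤ) : Matrix ι ι ℤ :=
  K • (Matrix.of (fun _ _ => 1) - 1) + exchangeSum x

theorem shiftedExchangeSum_apply_of_ne (K : ℤ) (x : freePositions u v w → ℤ) {i j : ι}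
    (hij : i ≠ j) : shiftedExchangeSum K x i j = K + exchangeSum x i j := by
  simp only [shiftedExchangeSum, Matrix.add_apply, Matrix.smul_apply, Matrix.sub_apply,
    Matrix.of_apply, Matrix.one_apply_ne hij, sub_zero, smul_eq_mul, mul_one]

theorem shiftedExchangeSum_apply_self (huv : u ≠ v) (huw : u ≠ w) (hvw : v ≠ w) (K : ℤ)
    (x : freePositions u v w → ℤ) (i : ι) : shiftedExchangeSum K x i i = 0 := by
  simp only [shiftedExchangeSum, Matrix.add_apply, Matrix.smul_apply, Matrix.sub_apply,
    Matrix.of_apply, Matrix.one_apply_eq, sub_self, smul_zero, zero_add,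
    exchangeSum_apply_self huv huw hvw]

theorem shiftedExchangeSum_nonneg (huv : u ≠ v) (huw : u ≠ w) (hvw : v ≠ w) {K : ℤ}
    {x : freePositions u v w → ℤ} (hx : 0 ≤ x) (hK : ∑ p, x p ≤ K) (i j : ι) :
    0 ≤ shiftedExchangeSum K x i j := by
  obtain rfl | hij := eq_or_ne i j
  · exact (shiftedExchangeSum_apply_self huv huw hvw K x i).ge
  · rw [shiftedExchangeSum_apply_of_ne K x hij]
    linarith [neg_sum_le_exchangeSum_apply huv huw hx i j]

theorem hasLineSum_shiftedExchangeSum (K : ℤ) (x : freePositions u v w → ℤ) :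
    HasLineSum (shiftedExchangeSum K x) (K * (Fintype.card ι - 1)) := by
  simpa [shiftedExchangeSum] using
    (hasLineSum_ones_sub_one.const_smul K).add (hasLineSum_exchangeSum x)

theorem pow_le_card_semiMagic_diag (huv : u ≠ v) (huw : u ≠ w) (hvw : v ≠ w) (k : ℕ) :
    (k + 1) ^ #(freePositions u v w) ≤ #(semiMagic (univ : Finset ι).diag
      (#(freePositions u v w) * k * (Fintype.card ι - 1))) := by
  set K := #(freePositions u v w) * k with hK
  let A (x : freePositions u v w → Fin (k + 1)) : Matrix ι ι ℤ :=
    shiftedExchangeSum K fun p => (x p : ℤ)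
  have hA_nonneg (x) (i j : ι) : 0 ≤ A x i j := by
    refine shiftedExchangeSum_nonneg huv huw hvw (fun p => Int.natCast_nonneg _) ?_ i j
    calc ∑ p, (x p : ℤ) ≤ ∑ _p : freePositions u v w, (k : ℤ) :=
          sum_le_sum fun p _ => by exact_mod_cast Nat.lt_succ_iff.1 (x p).2
      _ = K := by simp [hK]
  have hA_mem (x) : (A x).map Int.toNat ∈ semiMagic univ.diag (K * (Fintype.card ι - 1)) := by
    refine map_toNat_mem_semiMagic ?_ (hA_nonneg x) fun p hp => ?_
    · have hcard : 0 < Fintype.card ι := Fintype.card_pos_iff.2 ⟨u⟩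
      simpa [Nat.cast_pred hcard] using hasLineSum_shiftedExchangeSum (K : ℤ) fun p => (x p : ℤ)
    · rw [← (mem_diag.1 hp).2]
      exact shiftedExchangeSum_apply_self huv huw hvw _ _ _
  have hinj : Function.Injective fun x => (⟨_, hA_mem x⟩ : semiMagic univ.diag _) := by
    intro x y hxy
    funext p
    have hp : p.1.1 ≠ p.1.2 := (mem_freePositions.1 p.2).2.2.2
    have hentry : (A x p.1.1 p.1.2).toNat = (A y p.1.1 p.1.2).toNat :=
      congrFun (congrFun (congrArg Subtype.val hxy) p.1.1) p.1.2
    have hA_eq : A x p.1.1 p.1.2 = A y p.1.1 p.1.2 := by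
      rw [← Int.toNat_of_nonneg (hA_nonneg x _ _), hentry, Int.toNat_of_nonneg (hA_nonneg y _ _)]
    simpa [A, shiftedExchangeSum_apply_of_ne _ _ hp, exchangeSum_apply_coe, Fin.ext_iff] using hA_eq
  simpa using Fintype.card_le_of_injective _ hinj

end Exchange

theorem disjoint_diag_permGraph_finRotate {n : ℕ} (hn : 2 ≤ n) :
    Disjoint (univ : Finset (Fin n)).diag (permGraph (finRotate n)) := by
  refine Finset.disjoint_left.2 fun p hp hpσ => ?_
  have hmove : p.1 ∈ (finRotate n).support := by simp [support_finRotate_of_le hn]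
  exact Equiv.Perm.mem_support.1 hmove ((mem_permGraph.1 hpσ).trans (mem_diag.1 hp).2.symm)

theorem S_is_polynomial (n : ℕ) (hn : 3 ≤ n) :
    ∃ P : Polynomial ℚ, P.degree = (n ^ 2 - 3 * n + 1 : ℕ) ∧
      ∀ r : ℕ, P.eval (r : ℚ) = S n r := by
  obtain ⟨u, v, w, huv, huw, hvw⟩ : ∃ u v w : Fin n, u ≠ v ∧ u ≠ w ∧ v ≠ w :=
    Fintype.two_lt_card_iff.1 (by rw [Fintype.card_fin]; exact hn)
  obtain ⟨P, hP⟩ := isPolynomialFrom_zero_card_semiMagic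
    (disjoint_diag_permGraph_finRotate (n := n) (by lia))
  have hd : #(freePositions u v w) = n ^ 2 - 3 * n + 1 := by
    simpa using card_freePositions huv huw hvw
  have heval (r : ℕ) : P.eval (r : ℚ) = #(semiMagic (univ : Finset (Fin n)).diag r) :=
    hP r r.zero_le
  refine ⟨P, ?_, fun r => by rw [heval, S_eq_card_semiMagic]⟩
  rw [← hd]
  refine degree_eq_of_pow_le_of_le_pow (c := #(freePositions u v w) * (n - 1)) ?_
    (fun r => ?_) (fun r => ?_) fun k => ?_
  · exact Nat.mul_pos (by lia) (by lia)
  · rw [heval]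
    exact_mod_cast card_semiMagic_diag_le huv w r
  · rw [heval]
    positivity
  · have h := pow_le_card_semiMagic_diag huv huw hvw k
    rw [Fintype.card_fin, mul_right_comm] at h
    rw [heval]
    exact_mod_cast h
end

section
/- For every fixed integer n ≥ 3, if P is a polynomial with rational coefficients such that P(r) = S_n(r) for every natural number r, then P satisfies the reciprocity relation P(−(n−1) − x) = −P(x) for all x; equivalently, the polynomial identity P(−(n−1) − X) = −P(X) holds. -/
/-!
Matrices with zero diagonal and all line sums equal form a lattice `L`; its nonnegative points,
graded by the line sum, generate a rational cone. By Hall's theorem every nonzero face of this cone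
contains an integer point `σ` with entries `0` and `1` and line sum `1`. Perturb the cone by a
generic vector `v`, that is, keep the `x ∈ L` with `x + ε v ≥ 0` for all small `ε > 0`. Every such
point lies on exactly one ray in direction `σ` starting at a perturbed facet away from `σ`, so
induction on the rank writes the generating function as a polynomial in `1 / (1 - t)`. Replacing `v`
by `-v` changes the factor `1 / (1 - t)` of a ray starting in the cone into the factor `t / (1 - t)`
of a ray starting just outside it, and conversely; up to sign this is the substitution `t ↦ 1/t`,
which therefore turns the cone for `v` into the cone for `-v` with sign `(-1) ^ rank L`.

For `v > 0` the two perturbed cones are the nonnegative and the positive points of `L`. Adding the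
all-ones point, of line sum `n - 1`, maps the former onto the latter. The sign in the resulting
relation between `P (-(n - 1) - r)` and `P r` is `(-1) ^ (rank L + 1) = -1`, since the rank
`(n - 1) * (n - 2)` is even.
-/

section ReciprocalPairs

open Polynomial

/-- The power series `1 / (1 - t)`. -/
noncomputable def geomSeries : PowerSeries ℚ := PowerSeries.mk 1

/-- The pairs `(G(t), G(1/t))` of expansions at `0` of a rational function `G` that is a polynomial
in `1 / (1 - t)`; the substitution `t ↦ 1/t` sends `1 / (1 - t)` to `1 - 1 / (1 - t)`. -/
noncomputable def reciprocalPairs : Subalgebra ℚ (PowerSeries ℚ × PowerSeries ℚ) :=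
  Algebra.adjoin ℚ {(geomSeries, 1 - geomSeries)}

lemma generator_mem_reciprocalPairs : (geomSeries, 1 - geomSeries) ∈ reciprocalPairs :=
  Algebra.self_mem_adjoin_singleton ℚ _

lemma geomSeries_eq_one_add_X_mul : geomSeries = 1 + PowerSeries.X * geomSeries := by
  have h : geomSeries * (1 - PowerSeries.X) = 1 := PowerSeries.mk_one_mul_one_sub_eq_one ℚ
  linear_combination h

lemma eq_geomSeries_mul_of_eq_add_X_mul {F G : PowerSeries ℚ} (h : F = G + PowerSeries.X * F) :
    F = geomSeries * G := by
  have hg := geomSeries_eq_one_add_X_mul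
  linear_combination geomSeries * h - F * hg

lemma coeff_geomSeries_pow_succ (m r : ℕ) :
    PowerSeries.coeff r (geomSeries ^ (m + 1)) = ((m + r).choose m : ℚ) := by
  rw [geomSeries, PowerSeries.mk_one_pow_eq_mk_choose_add, PowerSeries.coeff_mk]

lemma coeff_succ_one_sub_geomSeries_pow_succ (m q : ℕ) :
    PowerSeries.coeff (q + 1) ((1 - geomSeries) ^ (m + 1)) = (-1) ^ (m + 1) * (q.choose m : ℚ) := by
  have hneg : 1 - geomSeries = -(PowerSeries.X * geomSeries) := by
    linear_combination -geomSeries_eq_one_add_X_mul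
  have hsign : (-1 : PowerSeries ℚ) ^ (m + 1) = PowerSeries.C ((-1) ^ (m + 1)) := by simp
  rw [hneg, neg_pow, mul_pow, hsign, PowerSeries.coeff_C_mul, PowerSeries.coeff_X_pow_mul',
    coeff_geomSeries_pow_succ]
  congr 1
  split_ifs with h
  · congr 2
    omega
  · rw [Nat.choose_eq_zero_of_lt (by omega), Nat.cast_zero]

lemma eval_neg_succ_preHilbertPoly_zero (m q : ℕ) :
    (preHilbertPoly ℚ m 0).eval (-((q : ℚ) + 1)) = (-1) ^ m * (q.choose m : ℚ) := by
  have hm : (m.factorial : ℚ) ≠ 0 := by positivity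
  have hshift : (X - C ((0 : ℕ) : ℚ) + 1).eval (-((q : ℚ) + 1)) = -(q : ℚ) := by
    simp
  rw [preHilbertPoly, eval_smul, eval_comp, hshift, ascPochhammer_eval_neg_eq_descPochhammer,
    descPochhammer_eval_eq_descFactorial, Nat.descFactorial_eq_factorial_mul_choose, smul_eq_mul]
  push_cast
  field_simp

theorem exists_polynomial_of_mem_reciprocalPairs {G H : PowerSeries ℚ}
    (h : (G, H) ∈ reciprocalPairs) :
    ∃ Q : ℚ[X], ∀ q : ℕ, Q.eval ((q : ℚ) + 1) = PowerSeries.coeff (q + 1) G ∧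
      Q.eval (-((q : ℚ) + 1)) = -PowerSeries.coeff (q + 1) H := by
  rw [reciprocalPairs, Algebra.adjoin_singleton_eq_range_aeval] at h
  obtain ⟨p, hp⟩ := h
  obtain ⟨rfl, rfl⟩ : aeval geomSeries p = G ∧ aeval (1 - geomSeries) p = H := by
    have hp' : aeval (geomSeries, 1 - geomSeries) p = (G, H) := hp
    rwa [aeval_prod_apply, Prod.mk.injEq] at hp'
  clear hp
  induction p using Polynomial.induction_on' with
  | add p₁ p₂ ih₁ ih₂ =>
    obtain ⟨Q₁, hQ₁⟩ := ih₁
    obtain ⟨Q₂, hQ₂⟩ := ih₂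
    refine ⟨Q₁ + Q₂, fun q => ?_⟩
    rw [eval_add, eval_add, (hQ₁ q).1, (hQ₁ q).2, (hQ₂ q).1, (hQ₂ q).2]
    exact ⟨by simp only [map_add], by simp only [map_add, neg_add]⟩
  | monomial k c =>
    cases k with
    | zero => exact ⟨0, fun q => by simp⟩
    | succ m =>
      refine ⟨c • preHilbertPoly ℚ m 0, fun q => ?_⟩
      have hpos := preHilbertPoly_eq_choose_sub_add ℚ m (Nat.zero_le (q + 1))
      push_cast at hpos
      simp only [aeval_monomial, ← Algebra.smul_def, PowerSeries.coeff_smul, eval_smul,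
        coeff_geomSeries_pow_succ, coeff_succ_one_sub_geomSeries_pow_succ, hpos,
        eval_neg_succ_preHilbertPoly_zero, smul_eq_mul]
      exact ⟨by rw [add_comm m], by ring⟩

end ReciprocalPairs

section DegreeSeries

variable {V : Type*} [AddCommGroup V] {deg : V →ₗ[ℤ] ℤ} {A B : Set V}

/-- The generating function of the number of elements of `A` of each degree `r ≥ 0`; it is
meaningful for sets that satisfy `IsGradedSet deg`. -/
noncomputable def degSeries (deg : V →ₗ[ℤ] ℤ) (A : Set V) : PowerSeries ℚ :=
  PowerSeries.mk fun r => ({x ∈ A | deg x = r}.ncard : ℚ)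

/-- All degrees on `A` are nonnegative and each is attained finitely often, so that `A` has a
generating function. -/
def IsGradedSet (deg : V →ₗ[ℤ] ℤ) (A : Set V) : Prop :=
  (∀ x ∈ A, 0 ≤ deg x) ∧ ∀ r : ℤ, {x ∈ A | deg x = r}.Finite

lemma IsGradedSet.mono (hB : IsGradedSet deg B) (hAB : A ⊆ B) : IsGradedSet deg A :=
  ⟨fun x hx => hB.1 x (hAB hx), fun r => (hB.2 r).subset fun _ hx => ⟨hAB hx.1, hx.2⟩⟩

lemma coeff_degSeries (deg : V →ₗ[ℤ] ℤ) (A : Set V) (r : ℕ) :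
    PowerSeries.coeff r (degSeries deg A) = ({x ∈ A | deg x = r}.ncard : ℚ) :=
  PowerSeries.coeff_mk _ _

lemma degSeries_empty (deg : V →ₗ[ℤ] ℤ) : degSeries deg ∅ = 0 := by
  ext r
  simp [coeff_degSeries]

lemma degSeries_singleton_zero (deg : V →ₗ[ℤ] ℤ) : degSeries deg {0} = 1 := by
  ext r
  rw [coeff_degSeries, PowerSeries.coeff_one]
  split_ifs with hr
  · have : {x ∈ ({0} : Set V) | deg x = r} = {0} := by
      ext x
      simp +contextual [hr]
    rw [this, Set.ncard_singleton, Nat.cast_one]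
  · have : {x ∈ ({0} : Set V) | deg x = r} = ∅ := by
      ext x
      simp only [Set.mem_singleton_iff, Set.mem_ofPred_eq, Set.mem_empty_iff_false, iff_false]
      rintro ⟨rfl, hx⟩
      exact hr (by simpa using hx.symm)
    rw [this, Set.ncard_empty, Nat.cast_zero]

lemma degSeries_union (hA : IsGradedSet deg A) (hB : IsGradedSet deg B) (hAB : Disjoint A B) :
    degSeries deg (A ∪ B) = degSeries deg A + degSeries deg B := by
  ext r
  have hsplit : {x ∈ A ∪ B | deg x = r} = {x ∈ A | deg x = r} ∪ {x ∈ B | deg x = r} := by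
    ext x
    simp only [Set.mem_ofPred_eq, Set.mem_union, or_and_right]
  rw [map_add, coeff_degSeries, coeff_degSeries, coeff_degSeries, hsplit,
    Set.ncard_union_eq (hAB.mono (Set.sep_subset _ _) (Set.sep_subset _ _)) (hA.2 r) (hB.2 r),
    Nat.cast_add]

lemma degSeries_biUnion {ι : Type*} (T : Finset ι) {A : ι → Set V}
    (hA : IsGradedSet deg (⋃ t ∈ T, A t)) (hdisj : (T : Set ι).PairwiseDisjoint A) :
    degSeries deg (⋃ t ∈ T, A t) = ∑ t ∈ T, degSeries deg (A t) := by
  classical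
  induction T using Finset.induction_on with
  | empty => simp [degSeries_empty]
  | insert t T ht ih =>
    rw [Finset.set_biUnion_insert] at hA ⊢
    rw [Finset.coe_insert] at hdisj
    have hT := hA.mono Set.subset_union_right
    have htT : Disjoint (A t) (⋃ s ∈ T, A s) := by
      refine Set.disjoint_iUnion₂_right.2 fun s hs => hdisj (Set.mem_insert _ _)
        (Set.mem_insert_of_mem _ hs) ?_
      rintro rfl
      exact ht hs
    rw [degSeries_union (hA.mono Set.subset_union_left) hT htT, Finset.sum_insert ht,
      ih hT (hdisj.subset (Set.subset_insert _ _))]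

lemma ncard_preimage_sub_right (A : Set V) (σ : V) (r : ℤ) :
    {x | x - σ ∈ A ∧ deg x = r + deg σ}.ncard = {x ∈ A | deg x = r}.ncard := by
  rw [← Set.ncard_image_of_injective {x ∈ A | deg x = r} (add_left_injective σ),
    Set.image_add_right]
  congr 1
  ext x
  simp [sub_eq_add_neg, ← eq_sub_iff_add_eq]

lemma degSeries_preimage_sub_right (hA : IsGradedSet deg A) {σ : V} (hσ : deg σ = 1) :
    degSeries deg {x | x - σ ∈ A} = PowerSeries.X * degSeries deg A := by
  ext r
  rw [coeff_degSeries]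
  cases r with
  | zero =>
    have hempty : {x ∈ {x | x - σ ∈ A} | deg x = (0 : ℕ)} = ∅ := by
      refine Set.eq_empty_of_forall_notMem fun x ⟨hx, hdeg⟩ => ?_
      have := hA.1 _ hx
      rw [map_sub, hσ, hdeg] at this
      norm_num at this
    rw [hempty, Set.ncard_empty, Nat.cast_zero, PowerSeries.coeff_zero_X_mul]
  | succ r =>
    rw [PowerSeries.coeff_succ_X_mul, coeff_degSeries, ← ncard_preimage_sub_right A σ, hσ]
    norm_cast

end DegreeSeries

section Shear

variable {E R : Type*} [AddCommGroup R] {L : Submodule ℤ (E → ℤ)} {σ : E → ℤ} {t : E}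

/-- The sublattice of the elements of `L` with vanishing entry at `t`. -/
def face (L : Submodule ℤ (E → ℤ)) (t : E) : Submodule ℤ (E → ℤ) :=
  L ⊓ LinearMap.ker (LinearMap.proj t)

/-- The projection along `σ` onto the vectors with vanishing entry at `t`, provided `σ t = 1`. -/
def shear (σ : E → ℤ) (t : E) (w : E → R) : E → R :=
  fun e => w e - σ e • w t

lemma mem_face {x : E → ℤ} : x ∈ face L t ↔ x ∈ L ∧ x t = 0 :=
  Iff.rfl

lemma shear_neg (w : E → R) : shear σ t (-w) = -shear σ t w := by
  funext e
  simp only [shear, Pi.neg_apply, smul_neg]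
  abel

lemma shear_eq_self {w : E → R} (hw : w t = 0) : shear σ t w = w := by
  funext e
  rw [shear, hw, smul_zero, sub_zero]

lemma shear_mem_face (hσ : σ ∈ L) (hσt : σ t = 1) {x : E → ℤ} : shear σ t x ∈ face L t ↔ x ∈ L := by
  have hx : shear σ t x = x - x t • σ := by
    funext e
    simp [shear, mul_comm]
  rw [mem_face, hx, L.sub_mem_iff_left (L.smul_mem _ hσ)]
  simp [hσt]

end Shear

section Genericity

variable {E R : Type*} {L : Submodule ℤ (E → ℤ)} {σ : E → ℤ} {t : E}

lemma span_pos_eq [Finite E] {x₀ : E → ℤ} (hx₀ : x₀ ∈ L) (hpos : ∀ e, 0 < x₀ e) :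
    Submodule.span ℤ {x | x ∈ L ∧ ∀ e, 0 < x e} = L := by
  cases nonempty_fintype E
  refine le_antisymm (Submodule.span_le.2 fun x hx => hx.1) fun x hx => ?_
  set N : ℤ := 1 + ∑ e, |x e|
  have hN : ∀ e, 0 < x e + N * x₀ e := fun e => by
    have hle : |x e| ≤ ∑ f, |x f| :=
      Finset.single_le_sum (fun f _ => abs_nonneg (x f)) (Finset.mem_univ e)
    nlinarith [neg_abs_le (x e), abs_nonneg (x e), hpos e]
  have hmem : x + N • x₀ ∈ Submodule.span ℤ {x | x ∈ L ∧ ∀ e, 0 < x e} :=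
    Submodule.subset_span ⟨L.add_mem hx (L.smul_mem N hx₀), hN⟩
  rw [← add_sub_cancel_right x (N • x₀)]
  exact sub_mem hmem (Submodule.smul_mem _ N (Submodule.subset_span ⟨hx₀, hpos⟩))

lemma exists_pos_linearIndependent_int (ι : Type*) [Finite ι] :
    ∃ τ : ι → ℝ, (∀ i, 0 < τ i) ∧ LinearIndependent ℤ τ := by
  have hrank : (Nat.card ι : Cardinal) ≤ Module.rank ℚ ℝ := by
    rw [Real.rank_rat_real]
    exact (Cardinal.natCast_lt_aleph0.trans Cardinal.aleph0_lt_continuum).le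
  obtain ⟨u, hu⟩ := exists_linearIndependent_of_le_rank hrank
  have hsign (i) : ∃ w : ℤˣ, 0 < w • u i := by
    rcases (hu.ne_zero i).lt_or_gt with h | h
    · exact ⟨-1, by rwa [Units.neg_smul, one_smul, neg_pos]⟩
    · exact ⟨1, by rwa [one_smul]⟩
  choose w hw using hsign
  have hli : LinearIndependent ℤ (w • u) :=
    (hu.restrict_scalars (smul_left_injective ℤ one_ne_zero)).units_smul w
  exact ⟨(w • u) ∘ Finite.equivFin ι, fun i => hw _, hli.comp _ (Finite.equivFin ι).injective⟩

variable [Fintype E] [AddCommGroup R]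

/-- The integer linear equations `∑ e, a e • w e = 0` satisfied by the vector `w`, encoded by their
coefficient vectors `a`. -/
def relations (w : E → R) : Submodule ℤ (E → ℤ) :=
  LinearMap.ker (Fintype.linearCombination ℤ w)

/-- The integer linear equations satisfied by all elements of the lattice `L`. -/
def equations (L : Submodule ℤ (E → ℤ)) : Submodule ℤ (E → ℤ) :=
  ⨅ x ∈ L, relations x

/-- A real vector is generic for `L` if it satisfies exactly the integer linear equations that hold
on `L`; thus it lies in the real span of `L`, but in no proper subspace of it that is defined over
`ℤ`. -/
def IsGeneric (L : Submodule ℤ (E → ℤ)) (v : E → ℝ) : Prop :=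
  relations v = equations L

lemma mem_relations {w : E → R} {a : E → ℤ} : a ∈ relations w ↔ ∑ e, a e • w e = 0 :=
  Iff.rfl

lemma mem_equations {a : E → ℤ} : a ∈ equations L ↔ ∀ x ∈ L, a ∈ relations x := by
  simp only [equations, Submodule.mem_iInf]

lemma relations_neg (w : E → R) : relations (-w) = relations w := by
  ext a
  simp only [mem_relations, Pi.neg_apply, smul_neg, Finset.sum_neg_distrib, neg_eq_zero]

lemma relations_intCast (x : E → ℤ) : relations (fun e => (x e : ℝ)) = relations x := by
  ext a
  simp only [mem_relations, zsmul_eq_mul, ← Int.cast_mul, ← Int.cast_sum, Int.cast_eq_zero,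
    Int.cast_id]

lemma single_mem_relations [DecidableEq E] {w : E → R} : Pi.single t 1 ∈ relations w ↔ w t = 0 := by
  simp [mem_relations, Pi.single_apply]

lemma single_sub_single_mem_relations [DecidableEq E] {w : E → R} {e f : E} :
    Pi.single e 1 - Pi.single f 1 ∈ relations w ↔ w e = w f := by
  simp [mem_relations, Pi.single_apply, sub_smul, sub_eq_zero]

lemma mem_relations_shear [DecidableEq E] (w : E → R) (a : E → ℤ) :
    a ∈ relations (shear σ t w) ↔ a - Pi.single t (∑ e, a e * σ e) ∈ relations w := by
  simp [mem_relations, shear, Pi.single_apply, sub_smul, smul_sub, Finset.sum_smul, mul_smul]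

lemma equations_le_equations_face (L : Submodule ℤ (E → ℤ)) (t : E) :
    equations L ≤ equations (face L t) :=
  fun _ ha => mem_equations.2 fun x hx => mem_equations.1 ha x hx.1

lemma mem_equations_face (hσ : σ ∈ L) (hσt : σ t = 1) {a : E → ℤ} :
    a ∈ equations (face L t) ↔ ∀ x ∈ L, a ∈ relations (shear σ t x) := by
  rw [mem_equations]
  refine ⟨fun h x hx => h _ ((shear_mem_face hσ hσt).2 hx), fun h x hx => ?_⟩
  rw [← shear_eq_self (σ := σ) hx.2]
  exact h x hx.1

namespace IsGeneric

variable {v : E → ℝ}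

protected lemma neg (hv : IsGeneric L v) : IsGeneric L (-v) := by
  rw [IsGeneric, relations_neg, hv]

protected lemma shear (hv : IsGeneric L v) (hσ : σ ∈ L) (hσt : σ t = 1) :
    IsGeneric (face L t) (shear σ t v) := by
  classical
  ext a
  rw [mem_equations_face hσ hσt, mem_relations_shear, hv, mem_equations]
  simp only [mem_relations_shear]

lemma apply_ne_zero (hv : IsGeneric L v) (hσ : σ ∈ L) (hσt : σ t = 1) : v t ≠ 0 := by
  classical
  intro h
  rw [← single_mem_relations, hv, mem_equations] at h
  exact absurd (single_mem_relations.1 (h σ hσ)) (by rw [hσt]; exact one_ne_zero)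

lemma apply_eq_apply (hv : IsGeneric L v) {e f : E} (hef : v e = v f) {x : E → ℤ} (hx : x ∈ L) :
    x e = x f := by
  classical
  rw [← single_sub_single_mem_relations, hv, mem_equations] at hef
  exact single_sub_single_mem_relations.1 (hef x hx)

lemma eq_bot_of_zero (h : IsGeneric L (0 : E → ℝ)) : L = ⊥ := by
  classical
  refine (Submodule.eq_bot_iff L).2 fun x hx => funext fun e => ?_
  have he : Pi.single e 1 ∈ relations (0 : E → ℝ) := single_mem_relations.2 rfl
  rw [h, mem_equations] at he
  exact single_mem_relations.1 (he x hx)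

end IsGeneric

lemma mem_relations_comm {a x : E → ℤ} : a ∈ relations x ↔ x ∈ relations a := by
  simp only [mem_relations, smul_eq_mul, mul_comm]

lemma mem_equations_span {s : Set (E → ℤ)} {a : E → ℤ} :
    a ∈ equations (Submodule.span ℤ s) ↔ ∀ x ∈ s, a ∈ relations x := by
  simp only [mem_equations, mem_relations_comm (a := a)]
  exact Submodule.span_le

/-- Take a combination of strictly positive generators of `L` whose coefficients are positive and
linearly independent over `ℤ`. -/
lemma exists_isGeneric_pos {x₀ : E → ℤ} (hx₀ : x₀ ∈ L) (hpos : ∀ e, 0 < x₀ e) :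
    ∃ v : E → ℝ, IsGeneric L v ∧ ∀ e, 0 < v e := by
  obtain ⟨G, hGpos, hG⟩ := Submodule.fg_span_iff_fg_span_finset_subset _ |>.1
    (IsNoetherian.noetherian (Submodule.span ℤ {x | x ∈ L ∧ ∀ e, 0 < x e}))
  rw [span_pos_eq hx₀ hpos] at hG
  obtain ⟨τ, hτ, hli⟩ := exists_pos_linearIndependent_int G
  refine ⟨fun e => ∑ g : G, g.1 e • τ g, ?_, fun e => ?_⟩
  · ext a
    have hcomb : ∑ e, a e • ∑ g : G, g.1 e • τ g = ∑ g : G, (∑ e, a e * g.1 e) • τ g := by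
      simp only [Finset.smul_sum, Finset.sum_smul, mul_smul]
      exact Finset.sum_comm
    rw [hG, mem_equations_span, mem_relations, hcomb]
    refine ⟨fun h g hg => Fintype.linearIndependent_iff.1 hli _ h ⟨g, hg⟩, fun h => ?_⟩
    exact Finset.sum_eq_zero fun g _ => by
      rw [show ∑ e, a e * g.1 e = 0 from h g.1 g.2, zero_smul]
  · have hne : Nonempty G := by
      by_contra hempty
      have hG0 : G = ∅ := Finset.not_nonempty_iff_eq_empty.1 fun hne => hempty hne.to_subtype
      rw [hG, hG0, Finset.coe_empty, Submodule.span_empty, Submodule.mem_bot] at hx₀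
      simpa [hx₀] using hpos e
    exact Finset.sum_pos (fun g _ => zsmul_pos (hτ g) ((hGpos g.2).2 e)) Finset.univ_nonempty

end Genericity

section PerturbedCone

variable {E : Type*} {L : Submodule ℤ (E → ℤ)} {σ x : E → ℤ} {v : E → ℝ} {t e : E}

/-- The entries of `x + ε v` for an infinitesimal `ε > 0`. -/
def perturb (x : E → ℤ) (v : E → ℝ) (e : E) : ℤ ×ₗ ℝ :=
  toLex (x e, v e)

/-- The elements `x` of `L` such that `x + ε v` is nonnegative for all small `ε > 0`. -/
def perturbedCone (L : Submodule ℤ (E → ℤ)) (v : E → ℝ) : Set (E → ℤ) :=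
  {x | x ∈ L ∧ 0 ≤ perturb x v}

/-- The lines along `σ` through the points of a set `A` of vectors with vanishing entry at `t`, cut
off where the entry at `t` is less than `m`. -/
def ray (σ : E → ℤ) (t : E) (A : Set (E → ℤ)) (m : ℤ) : Set (E → ℤ) :=
  {x | shear σ t x ∈ A ∧ m ≤ x t}

/-- The generating function of a line cut off at `0` if `0 ≤ s` and at `1` otherwise. -/
noncomputable def rayFactor (s : ℝ) : PowerSeries ℚ :=
  if 0 ≤ s then geomSeries else geomSeries - 1

lemma rayFactor_mem_reciprocalPairs {s : ℝ} (hs : s ≠ 0) :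
    (rayFactor s, -rayFactor (-s)) ∈ reciprocalPairs := by
  rcases hs.lt_or_gt with h | h
  · have hpair : (rayFactor s, -rayFactor (-s)) = (geomSeries, 1 - geomSeries) - 1 := by
      simp [rayFactor, h.not_ge, h.le, Prod.ext_iff]
    exact hpair ▸ sub_mem generator_mem_reciprocalPairs (one_mem _)
  · have hpair : (rayFactor s, -rayFactor (-s)) = (geomSeries, 1 - geomSeries) := by
      simp [rayFactor, h.not_ge, h.le]
    exact hpair ▸ generator_mem_reciprocalPairs

lemma perturb_nonneg : 0 ≤ perturb x v e ↔ 0 < x e ∨ x e = 0 ∧ 0 ≤ v e := by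
  rw [perturb, ← toLex_zero, Prod.Lex.toLex_le_toLex]
  simp [eq_comm]

lemma nonneg_of_perturb_nonneg (h : 0 ≤ perturb x v e) : 0 ≤ x e := by
  rcases perturb_nonneg.1 h with h | h
  exacts [h.le, h.1.ge]

lemma shear_perturb (σ x : E → ℤ) (t : E) (v : E → ℝ) :
    shear σ t (perturb x v) = perturb (shear σ t x) (shear σ t v) :=
  rfl

lemma perturbedCone_subset_nonneg (L : Submodule ℤ (E → ℤ)) (v : E → ℝ) :
    perturbedCone L v ⊆ {x | x ∈ L ∧ 0 ≤ x} :=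
  fun _ hx => ⟨hx.1, fun e => nonneg_of_perturb_nonneg (hx.2 e)⟩

lemma perturbedCone_of_pos (hv : ∀ e, 0 < v e) : perturbedCone L v = {x | x ∈ L ∧ 0 ≤ x} := by
  refine (perturbedCone_subset_nonneg L v).antisymm fun x hx => ⟨hx.1, fun e => ?_⟩
  exact perturb_nonneg.2 ((hx.2 e).lt_or_eq.imp_right fun h => ⟨h.symm, (hv e).le⟩)

lemma perturbedCone_neg_of_pos (hv : ∀ e, 0 < v e) :
    perturbedCone L (-v) = {x | x ∈ L ∧ ∀ e, 0 < x e} := by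
  ext x
  refine and_congr_right fun _ => forall_congr' fun e => ?_
  change 0 ≤ perturb x (-v) e ↔ 0 < x e
  simp [perturb_nonneg, (hv e).not_ge]

lemma shear_nonneg_iff {R : Type*} [AddCommGroup R] [PartialOrder R] [IsOrderedAddMonoid R]
    (hσ : ∀ e, σ e = 0 ∨ σ e = 1) {w : E → R} :
    0 ≤ shear σ t w ↔ ∀ e, (σ e = 0 → 0 ≤ w e) ∧ (σ e = 1 → w t ≤ w e) := by
  refine forall_congr' fun e => ?_
  rcases hσ e with he | he <;> simp [shear, he]

lemma mem_ray_perturbedCone (hσ : σ ∈ L) (hσ01 : ∀ e, σ e = 0 ∨ σ e = 1) (hσt : σ t = 1) :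
    x ∈ ray σ t (perturbedCone (face L t) (shear σ t v)) (if 0 ≤ v t then 0 else 1) ↔
      x ∈ L ∧ 0 ≤ perturb x v t ∧
        ∀ e, (σ e = 0 → 0 ≤ perturb x v e) ∧ (σ e = 1 → perturb x v t ≤ perturb x v e) := by
  have hcut : (if 0 ≤ v t then 0 else 1) ≤ x t ↔ 0 ≤ perturb x v t := by
    rw [perturb_nonneg]
    split_ifs with h <;> simp only [h, and_true, and_false, or_false] <;> omega
  simp only [ray, perturbedCone, Set.mem_ofPred_eq, shear_mem_face hσ hσt, ← shear_perturb,
    shear_nonneg_iff hσ01, hcut]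
  tauto

/-- A set of indices in the support of the 0-1 vector `σ` at which `v` takes each of its values on
that support exactly once. -/
structure IsTransversal (σ : E → ℤ) (v : E → ℝ) (T : Set E) : Prop where
  apply_eq_one : ∀ t ∈ T, σ t = 1
  injOn : Set.InjOn v T
  exists_eq : ∀ e, σ e = 1 → ∃ t ∈ T, v t = v e

namespace IsTransversal

lemma neg {T : Set E} (hT : IsTransversal σ v T) : IsTransversal σ (-v) T where
  apply_eq_one := hT.apply_eq_one
  injOn := neg_injective.comp_injOn hT.injOn
  exists_eq e he := (hT.exists_eq e he).imp fun _ h => ⟨h.1, congrArg Neg.neg h.2⟩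

end IsTransversal

lemma exists_isTransversal [Finite E] (σ : E → ℤ) (v : E → ℝ) :
    ∃ T : Finset E, IsTransversal σ v T := by
  obtain ⟨T, hT, hbij⟩ := Set.exists_subset_bijOn {e | σ e = 1} v
  lift T to Finset E using T.toFinite
  exact ⟨T, hT, hbij.injOn, fun e he => hbij.surjOn ⟨e, he, rfl⟩⟩

lemma pairwiseDisjoint_ray (hσ : σ ∈ L) (hσ01 : ∀ e, σ e = 0 ∨ σ e = 1)
    {T : Finset E} (hT : IsTransversal σ v T) :
    (T : Set E).PairwiseDisjoint fun t =>
      ray σ t (perturbedCone (face L t) (shear σ t v)) (if 0 ≤ v t then 0 else 1) := by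
  intro s hs t ht hst
  have hσs := hT.apply_eq_one s hs
  have hσt := hT.apply_eq_one t ht
  refine Set.disjoint_left.2 fun x hxs hxt => hst (hT.injOn hs ht ?_)
  have hle := (((mem_ray_perturbedCone hσ hσ01 hσs).1 hxs).2.2 t).2 hσt
  have hge := (((mem_ray_perturbedCone hσ hσ01 hσt).1 hxt).2.2 s).2 hσs
  exact congrArg (fun p => (ofLex p).2) (hle.antisymm hge)

lemma ray_zero_eq_union {A : Set (E → ℤ)} (hA : ∀ x ∈ A, x t = 0) :
    ray σ t A 0 = A ∪ ray σ t A 1 := by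
  ext x
  have hbottom : x ∈ A ↔ shear σ t x ∈ A ∧ x t = 0 :=
    ⟨fun h => ⟨by rwa [shear_eq_self (hA x h)], hA x h⟩, fun h => shear_eq_self h.2 ▸ h.1⟩
  rw [Set.mem_union, hbottom, ray, ray, Set.mem_ofPred_eq, Set.mem_ofPred_eq, ← and_or_left]
  exact and_congr_right fun _ => by omega

lemma ray_one_eq_preimage_sub_right (A : Set (E → ℤ)) (hσt : σ t = 1) :
    ray σ t A 1 = {x | x - σ ∈ ray σ t A 0} := by
  ext x
  have hshear : shear σ t (x - σ) = shear σ t x := by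
    funext e
    simp only [shear, Pi.sub_apply, hσt, smul_eq_mul]
    ring
  simp only [ray, Set.mem_ofPred_eq, hshear, Pi.sub_apply, hσt, sub_nonneg]

lemma degSeries_ray {deg : (E → ℤ) →ₗ[ℤ] ℤ} {A : Set (E → ℤ)} (hσt : σ t = 1)
    (hσ1 : deg σ = 1) (hA : ∀ x ∈ A, x t = 0) (hgr : IsGradedSet deg (ray σ t A 0)) (s : ℝ) :
    degSeries deg (ray σ t A (if 0 ≤ s then 0 else 1)) = rayFactor s * degSeries deg A := by
  have hdisj : Disjoint A (ray σ t A 1) :=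
    Set.disjoint_left.2 fun x hx h => by simpa [hA x hx] using h.2
  have hsum : degSeries deg (ray σ t A 0) = degSeries deg A + degSeries deg (ray σ t A 1) := by
    rw [ray_zero_eq_union hA] at hgr ⊢
    exact degSeries_union (hgr.mono Set.subset_union_left) (hgr.mono Set.subset_union_right) hdisj
  have hX : degSeries deg (ray σ t A 1) = PowerSeries.X * degSeries deg (ray σ t A 0) := by
    rw [ray_one_eq_preimage_sub_right A hσt, degSeries_preimage_sub_right hgr hσ1]
  have hzero := eq_geomSeries_mul_of_eq_add_X_mul (hX ▸ hsum)
  rw [rayFactor]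
  split_ifs with hs
  · exact hzero
  · linear_combination hzero - hsum

lemma ray_perturbedCone_subset_nonneg (hσ : σ ∈ L) (hσ0 : 0 ≤ σ) (hσt : σ t = 1) :
    ray σ t (perturbedCone (face L t) v) 0 ⊆ {x | x ∈ L ∧ 0 ≤ x} := by
  rintro x ⟨hx, hxt⟩
  obtain ⟨hxL, hx⟩ := perturbedCone_subset_nonneg _ _ hx
  refine ⟨(shear_mem_face hσ hσt).1 hxL, fun e => ?_⟩
  have hle : 0 ≤ x e - σ e * x t := hx e
  have hmul := mul_nonneg (hσ0 e) hxt
  change 0 ≤ x e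
  linarith

variable [Fintype E]

/-- The point at which the line along `σ` through `x + ε v` leaves the cone has a vanishing entry
where `x + ε v` is minimal on the support of `σ`. -/
lemma perturbedCone_eq_biUnion_ray (hv : IsGeneric L v) (hσ : σ ∈ L)
    (hσ01 : ∀ e, σ e = 0 ∨ σ e = 1) (hσ0 : σ ≠ 0) {T : Finset E} (hT : IsTransversal σ v T) :
    perturbedCone L v =
      ⋃ t ∈ T, ray σ t (perturbedCone (face L t) (shear σ t v)) (if 0 ≤ v t then 0 else 1) := by
  ext x
  simp only [Set.mem_iUnion₂]
  constructor
  · rintro ⟨hxL, hx⟩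
    have hsupp : {e | σ e = 1}.Nonempty := by
      obtain ⟨e, he⟩ := Function.ne_iff.1 hσ0
      exact ⟨e, (hσ01 e).resolve_left he⟩
    obtain ⟨f, hf, hmin⟩ := Set.exists_min_image _ (perturb x v) (Set.toFinite _) hsupp
    obtain ⟨t, ht, htf⟩ := hT.exists_eq f hf
    have hxt : perturb x v t = perturb x v f := by
      rw [perturb, perturb, htf, hv.apply_eq_apply htf hxL]
    refine ⟨t, ht, (mem_ray_perturbedCone hσ hσ01 (hT.apply_eq_one t ht)).2 ?_⟩
    exact ⟨hxL, hx t, fun e => ⟨fun _ => hx e, fun he => hxt.trans_le (hmin e he)⟩⟩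
  · rintro ⟨t, ht, hx⟩
    obtain ⟨hxL, hxt, hx⟩ := (mem_ray_perturbedCone hσ hσ01 (hT.apply_eq_one t ht)).1 hx
    exact ⟨hxL, fun e => (hσ01 e).elim (hx e).1 fun he => hxt.trans ((hx e).2 he)⟩

lemma degSeries_perturbedCone {deg : (E → ℤ) →ₗ[ℤ] ℤ}
    (hgr : IsGradedSet deg {x | x ∈ L ∧ 0 ≤ x}) (hv : IsGeneric L v) (hσ : σ ∈ L)
    (hσ01 : ∀ e, σ e = 0 ∨ σ e = 1) (hσ1 : deg σ = 1) {T : Finset E} (hT : IsTransversal σ v T) :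
    degSeries deg (perturbedCone L v) =
      ∑ t ∈ T, rayFactor (v t) * degSeries deg (perturbedCone (face L t) (shear σ t v)) := by
  have hσ0 : σ ≠ 0 := by
    rintro rfl
    simp at hσ1
  have hnonneg : 0 ≤ σ := fun e => (hσ01 e).elim Eq.ge fun h => h ▸ zero_le_one
  have hunion := perturbedCone_eq_biUnion_ray hv hσ hσ01 hσ0 hT
  rw [hunion, degSeries_biUnion T (hunion ▸ hgr.mono (perturbedCone_subset_nonneg L v))
    (pairwiseDisjoint_ray hσ hσ01 hT)]
  refine Finset.sum_congr rfl fun t ht => ?_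
  have hσt := hT.apply_eq_one t ht
  exact degSeries_ray hσt hσ1 (fun x hx => hx.1.2)
    (hgr.mono (ray_perturbedCone_subset_nonneg hσ hnonneg hσt)) _

end PerturbedCone

section Reciprocity

variable {E : Type*} {L : Submodule ℤ (E → ℤ)} {deg : (E → ℤ) →ₗ[ℤ] ℤ} {σ : E → ℤ}
  {v : E → ℝ} {t : E}

open Module in
lemma finrank_inf_ker_add_finrank_map {R M N : Type*} [CommRing R] [IsDomain R] [AddCommGroup M]
    [AddCommGroup N] [Module R M] [Module R N] (f : M →ₗ[R] N) (p : Submodule R M)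
    [Module.Finite R p] :
    finrank R (p ⊓ LinearMap.ker f : Submodule R M) + finrank R (p.map f) = finrank R p := by
  have hker : finrank R (LinearMap.ker (f.domRestrict p)) =
      finrank R (p ⊓ LinearMap.ker f : Submodule R M) := by
    rw [LinearMap.ker_domRestrict, ← Submodule.map_comap_subtype]
    exact (Submodule.equivMapOfInjective _ p.injective_subtype _).finrank_eq
  rw [← LinearMap.range_domRestrict, ← (f.domRestrict p).quotKerEquivRange.finrank_eq, ← hker,
    add_comm, Submodule.finrank_quotient_add_finrank]

/-- Adding the all-ones vector identifies the nonnegative elements of `L` with the positive ones, of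
degree larger by `deg 1`. -/
lemma coeff_degSeries_pos (h1 : 1 ∈ L) {d : ℕ} (hd : deg 1 = d) (q : ℕ) :
    PowerSeries.coeff (q + d) (degSeries deg {x | x ∈ L ∧ ∀ e, 0 < x e}) =
      PowerSeries.coeff q (degSeries deg {x | x ∈ L ∧ 0 ≤ x}) := by
  rw [coeff_degSeries, coeff_degSeries, ← ncard_preimage_sub_right {x | x ∈ L ∧ 0 ≤ x} 1]
  congr 2
  ext x
  have hpos : 0 ≤ x - 1 ↔ ∀ e, 0 < x e :=
    forall_congr' fun e => sub_nonneg (a := x e) (b := 1)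
  simp only [Set.mem_ofPred_eq, L.sub_mem_iff_left h1, hpos, hd, Nat.cast_add]

lemma finrank_face_add_one [Finite E] (hσ : σ ∈ L) (hσt : σ t = 1) :
    Module.finrank ℤ (face L t) + 1 = Module.finrank ℤ L := by
  have hmap : L.map (LinearMap.proj t : (E → ℤ) →ₗ[ℤ] ℤ) = ⊤ := by
    refine Submodule.eq_top_iff'.2 fun m => ⟨m • σ, L.smul_mem m hσ, ?_⟩
    simp [hσt]
  rw [← finrank_inf_ker_add_finrank_map (LinearMap.proj t) L, hmap, finrank_top,
    Module.finrank_self, face]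

variable [Fintype E]

/-- A lattice whose cone of nonnegative real points is the cone over a compressed 0-1 polytope: the
slice of degree one lies in the unit cube, and every face of the cone contains an integer point of
degree one. The faces are given by their relative interior points `w`. -/
structure IsCompressed (L : Submodule ℤ (E → ℤ)) (deg : (E → ℤ) →ₗ[ℤ] ℤ) : Prop where
  apply_le_deg : ∀ x ∈ L, 0 ≤ x → ∀ e, x e ≤ deg x
  exists_deg_eq_one : ∀ w : E → ℝ, equations L ≤ relations w → 0 ≤ w → w ≠ 0 →
    ∃ σ ∈ L, 0 ≤ σ ∧ deg σ = 1 ∧ ∀ e, w e = 0 → σ e = 0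

namespace IsCompressed

protected lemma face (h : IsCompressed L deg) (t : E) : IsCompressed (face L t) deg where
  apply_le_deg x hx := h.apply_le_deg x hx.1
  exists_deg_eq_one w hw hw0 hne := by
    classical
    obtain ⟨σ, hσ, hσ0, hσ1, hsupp⟩ :=
      h.exists_deg_eq_one w ((equations_le_equations_face L t).trans hw) hw0 hne
    have ht : Pi.single t 1 ∈ equations (face L t) :=
      mem_equations.2 fun x hx => single_mem_relations.2 hx.2
    exact ⟨σ, ⟨hσ, hsupp t (single_mem_relations.1 (hw ht))⟩, hσ0, hσ1, hsupp⟩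

lemma isGradedSet_nonneg (h : IsCompressed L deg) : IsGradedSet deg {x | x ∈ L ∧ 0 ≤ x} := by
  refine ⟨fun x ⟨hxL, hx⟩ => ?_, fun r => ?_⟩
  · cases isEmpty_or_nonempty E with
    | inl _ => rw [Subsingleton.elim x 0, map_zero]
    | inr hE => exact (hx hE.some).trans (h.apply_le_deg x hxL hx hE.some)
  · classical
    refine (Set.finite_Icc (0 : E → ℤ) fun _ => r).subset ?_
    rintro x ⟨⟨hxL, hx⟩, rfl⟩
    exact ⟨hx, h.apply_le_deg x hxL hx⟩

lemma eq_zero_or_one (h : IsCompressed L deg) (hσ : σ ∈ L) (hσ0 : 0 ≤ σ) (hσ1 : deg σ = 1) (e : E) :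
    σ e = 0 ∨ σ e = 1 := by
  have h0 : 0 ≤ σ e := hσ0 e
  have h1 := h.apply_le_deg σ hσ hσ0 e
  omega

lemma perturbedCone_eq_empty (h : IsCompressed L deg) (hno : ¬∃ σ ∈ L, 0 ≤ σ ∧ deg σ = 1)
    (hv : IsGeneric L v) (hv0 : v ≠ 0) : perturbedCone L v = ∅ := by
  have hzero : ∀ w : E → ℝ, equations L ≤ relations w → 0 ≤ w → w = 0 := by
    intro w hw hw0
    by_contra hne
    obtain ⟨σ, hσ, hσ0, hσ1, -⟩ := h.exists_deg_eq_one w hw hw0 hne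
    exact hno ⟨σ, hσ, hσ0, hσ1⟩
  refine Set.eq_empty_of_forall_notMem fun x hx => hv0 (hzero v hv.ge fun e => ?_)
  have hcast : (fun e => (x e : ℝ)) = 0 := by
    refine hzero _ ?_ fun e => Int.cast_nonneg (nonneg_of_perturb_nonneg (hx.2 e))
    rw [relations_intCast]
    exact iInf₂_le x hx.1
  have hxe : x e = 0 := Int.cast_eq_zero.1 (congrFun hcast e)
  exact ((perturb_nonneg.1 (hx.2 e)).resolve_left hxe.not_gt).2

lemma degSeries_mem_reciprocalPairs_of_not_exists (h : IsCompressed L deg)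
    (hno : ¬∃ σ ∈ L, 0 ≤ σ ∧ deg σ = 1) (hv : IsGeneric L v) :
    (degSeries deg (perturbedCone L v),
      (-1) ^ Module.finrank ℤ L * degSeries deg (perturbedCone L (-v))) ∈ reciprocalPairs := by
  by_cases hv0 : v = 0
  · subst hv0
    obtain rfl := hv.eq_bot_of_zero
    have hcone : perturbedCone ⊥ (0 : E → ℝ) = {0} := by
      ext x
      refine ⟨fun hx => hx.1, fun hx => ⟨hx, fun e => perturb_nonneg.2 (Or.inr ⟨?_, le_rfl⟩)⟩⟩
      exact congrFun hx e
    rw [neg_zero, hcone, degSeries_singleton_zero, finrank_bot, pow_zero, one_mul]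
    exact one_mem _
  · rw [h.perturbedCone_eq_empty hno hv hv0,
      h.perturbedCone_eq_empty hno hv.neg (neg_ne_zero.2 hv0), degSeries_empty, mul_zero]
    exact zero_mem _

lemma degSeries_mem_reciprocalPairs_of_face (h : IsCompressed L deg) (hv : IsGeneric L v)
    (hσ : σ ∈ L) (hσ0 : 0 ≤ σ) (hσ1 : deg σ = 1)
    (hface : ∀ t, σ t = 1 → (degSeries deg (perturbedCone (face L t) (shear σ t v)),
      (-1) ^ Module.finrank ℤ (face L t) *
        degSeries deg (perturbedCone (face L t) (-shear σ t v))) ∈ reciprocalPairs) :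
    (degSeries deg (perturbedCone L v),
      (-1) ^ Module.finrank ℤ L * degSeries deg (perturbedCone L (-v))) ∈ reciprocalPairs := by
  obtain ⟨T, hT⟩ := exists_isTransversal σ v
  have hgr := h.isGradedSet_nonneg
  have hσ01 := h.eq_zero_or_one hσ hσ0 hσ1
  have hsum (F G : E → PowerSeries ℚ) : (∑ t ∈ T, F t, ∑ t ∈ T, G t) =
      ∑ t ∈ T, (F t, G t) := by
    simp only [Prod.ext_iff, Prod.fst_sum, Prod.snd_sum, and_self]
  rw [degSeries_perturbedCone hgr hv hσ hσ01 hσ1 hT,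
    degSeries_perturbedCone hgr hv.neg hσ hσ01 hσ1 hT.neg, Finset.mul_sum, hsum]
  refine sum_mem fun t ht => ?_
  have hσt := hT.apply_eq_one t ht
  convert mul_mem (rayFactor_mem_reciprocalPairs (hv.apply_ne_zero hσ hσt)) (hface t hσt) using 1
  rw [Prod.mk_mul_mk, shear_neg, Pi.neg_apply, ← finrank_face_add_one hσ hσt, pow_succ]
  congr 1
  ring

/-- The signs in the second component are `(-1) ^ rank` because `rayFactor` contributes one sign for
each step down to a face. -/
theorem degSeries_mem_reciprocalPairs (h : IsCompressed L deg) (hv : IsGeneric L v) :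
    (degSeries deg (perturbedCone L v),
      (-1) ^ Module.finrank ℤ L * degSeries deg (perturbedCone L (-v))) ∈ reciprocalPairs := by
  induction hk : Module.finrank ℤ L using Nat.strong_induction_on generalizing L v with
  | _ k ih =>
    subst hk
    by_cases hex : ∃ σ ∈ L, 0 ≤ σ ∧ deg σ = 1
    · obtain ⟨σ, hσ, hσ0, hσ1⟩ := hex
      refine h.degSeries_mem_reciprocalPairs_of_face hv hσ hσ0 hσ1 fun t hσt => ?_
      exact ih _ (finrank_face_add_one hσ hσt ▸ Nat.lt_succ_self _) (h.face t) (hv.shear hσ hσt) rfl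
    · exact h.degSeries_mem_reciprocalPairs_of_not_exists hex hv

theorem nonneg_pos_mem_reciprocalPairs (h : IsCompressed L deg) {x₀ : E → ℤ} (hx₀ : x₀ ∈ L)
    (hpos : ∀ e, 0 < x₀ e) :
    (degSeries deg {x | x ∈ L ∧ 0 ≤ x},
      (-1) ^ Module.finrank ℤ L * degSeries deg {x | x ∈ L ∧ ∀ e, 0 < x e}) ∈ reciprocalPairs := by
  obtain ⟨v, hv, hv0⟩ := exists_isGeneric_pos hx₀ hpos
  rw [← perturbedCone_of_pos hv0, ← perturbedCone_neg_of_pos hv0]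
  exact h.degSeries_mem_reciprocalPairs hv

theorem exists_polynomial_reciprocity (h : IsCompressed L deg) (h1 : 1 ∈ L) {d : ℕ}
    (hd : deg 1 = d + 1) :
    ∃ Q : Polynomial ℚ, ∀ q : ℕ,
      Q.eval ((q : ℚ) + 1) =
        PowerSeries.coeff (q + 1) (degSeries deg {x | x ∈ L ∧ 0 ≤ x}) ∧
      Q.eval (-((q : ℚ) + d + 1)) = (-1) ^ (Module.finrank ℤ L + 1) *
        PowerSeries.coeff q (degSeries deg {x | x ∈ L ∧ 0 ≤ x}) := by
  obtain ⟨Q, hQ⟩ := exists_polynomial_of_mem_reciprocalPairs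
    (h.nonneg_pos_mem_reciprocalPairs h1 fun _ => one_pos)
  refine ⟨Q, fun q => ⟨(hQ q).1, ?_⟩⟩
  have hsign : (-1 : PowerSeries ℚ) ^ Module.finrank ℤ L =
      PowerSeries.C ((-1) ^ Module.finrank ℤ L) := by simp
  have hneg := (hQ (q + d)).2
  rw [hsign, PowerSeries.coeff_C_mul, add_assoc,
    coeff_degSeries_pos h1 (d := d + 1) (by exact_mod_cast hd)] at hneg
  push_cast at hneg
  rw [hneg, pow_succ]
  ring

end IsCompressed

end Reciprocity

section SideDifference

variable {α : Type*} [Fintype α]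

/-- The balance of a vertex labeling: the sum over the left vertices minus that over the right. -/
def sideDifference (α : Type*) [Fintype α] : (α ⊕ α → ℤ) →ₗ[ℤ] ℤ :=
  Fintype.linearCombination ℤ (Sum.elim (fun _ => 1) fun _ => -1)

lemma sideDifference_apply (y : α ⊕ α → ℤ) :
    sideDifference α y = ∑ i, y (Sum.inl i) - ∑ j, y (Sum.inr j) := by
  simp [sideDifference, Fintype.linearCombination_apply, sub_eq_add_neg]

lemma finrank_ker_sideDifference_add_one [Nonempty α] :
    Module.finrank ℤ (LinearMap.ker (sideDifference α)) + 1 = 2 * Fintype.card α := by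
  classical
  have hsurj : (⊤ : Submodule ℤ (α ⊕ α → ℤ)).map (sideDifference α) = ⊤ := by
    obtain ⟨k⟩ := ‹Nonempty α›
    refine Submodule.eq_top_iff'.2 fun m => ⟨m • Pi.single (Sum.inl k) 1, trivial, ?_⟩
    simp [sideDifference_apply, Pi.single_apply]
  have hrank := finrank_inf_ker_add_finrank_map (sideDifference α) ⊤
  rw [hsurj, top_inf_eq, finrank_top, Module.finrank_self, finrank_top,
    Module.finrank_fintype_fun_eq_card, Fintype.card_sum, ← two_mul] at hrank
  exact hrank

end SideDifference

section BalancedLabelings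

open Matrix

variable {E α : Type*} [Fintype E] [DecidableEq α] {s t : E → α}

/-- The vertex-edge incidence matrix of the bipartite multigraph whose edge `e` joins the left
vertex `s e` to the right vertex `t e`. -/
def incidence (s t : E → α) : Matrix (α ⊕ α) E ℤ :=
  Matrix.of (Sum.elim (fun i e => if s e = i then 1 else 0) fun j e => if t e = j then 1 else 0)

/-- The lattice of integer edge labelings with the same sum around every vertex. -/
def balanced (s t : E → α) : Submodule ℤ (E → ℤ) :=
  (Submodule.span ℤ {1}).comap (incidence s t).mulVecLin

/-- The sum of the labels around the vertex `k`. -/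
def vertexSum (s t : E → α) (k : α ⊕ α) : (E → ℤ) →ₗ[ℤ] ℤ :=
  LinearMap.proj k ∘ₗ (incidence s t).mulVecLin

lemma sum_incidence_inl {R : Type*} [AddCommGroup R] (w : E → R) (i : α) :
    ∑ e, incidence s t (Sum.inl i) e • w e = ∑ e with s e = i, w e := by
  simp [incidence, Finset.sum_filter]

lemma sum_incidence_inr {R : Type*} [AddCommGroup R] (w : E → R) (j : α) :
    ∑ e, incidence s t (Sum.inr j) e • w e = ∑ e with t e = j, w e := by
  simp [incidence, Finset.sum_filter]

lemma vertexSum_inl (x : E → ℤ) (i : α) : vertexSum s t (Sum.inl i) x = ∑ e with s e = i, x e :=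
  sum_incidence_inl x i

lemma vertexSum_inr (x : E → ℤ) (j : α) : vertexSum s t (Sum.inr j) x = ∑ e with t e = j, x e :=
  sum_incidence_inr x j

lemma vertexSum_single [DecidableEq E] (k : α ⊕ α) (e : E) :
    vertexSum s t k (Pi.single e 1) = incidence s t k e := by
  simp [vertexSum]

lemma mem_balanced {x : E → ℤ} (k : α ⊕ α) :
    x ∈ balanced s t ↔ ∀ l, vertexSum s t l x = vertexSum s t k x := by
  rw [balanced, Submodule.mem_comap, Submodule.mem_span_singleton]
  refine ⟨fun ⟨r, hr⟩ l => ?_, fun h => ⟨vertexSum s t k x, funext fun l => ?_⟩⟩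
  · change (incidence s t).mulVecLin x l = (incidence s t).mulVecLin x k
    simp only [← hr, Pi.smul_apply, Pi.one_apply]
  · rw [Pi.smul_apply, Pi.one_apply, smul_eq_mul, mul_one, ← h l]
    rfl

lemma mem_balanced_and_vertexSum_eq {x : E → ℤ} {k : α ⊕ α} {r : ℤ} :
    x ∈ balanced s t ∧ vertexSum s t k x = r ↔
      (∀ i, ∑ e with s e = i, x e = r) ∧ ∀ j, ∑ e with t e = j, x e = r := by
  have hsums : (∀ l, vertexSum s t l x = r) ↔
      (∀ i, ∑ e with s e = i, x e = r) ∧ ∀ j, ∑ e with t e = j, x e = r := by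
    simp only [Sum.forall, vertexSum_inl, vertexSum_inr]
  rw [mem_balanced k, ← hsums]
  exact ⟨fun h l => (h.1 l).trans h.2, fun h => ⟨fun l => (h l).trans (h k).symm, h k⟩⟩

lemma sum_incidence_eq_of_le {w : E → ℝ} (hw : equations (balanced s t) ≤ relations w)
    (k l : α ⊕ α) : ∑ e, incidence s t k e • w e = ∑ e, incidence s t l e • w e := by
  have hmem : incidence s t k - incidence s t l ∈ equations (balanced s t) := by
    refine mem_equations.2 fun x hx => ?_
    simp only [mem_relations, Pi.sub_apply, sub_smul, Finset.sum_sub_distrib]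
    exact sub_eq_zero.2 ((mem_balanced l).1 hx k)
  have hrel := mem_relations.1 (hw hmem)
  simpa only [Pi.sub_apply, sub_smul, Finset.sum_sub_distrib, sub_eq_zero] using hrel

lemma sum_filter_mem_eq_card_mul {w : E → ℝ} {r : ℝ} (h : ∀ i, ∑ e with s e = i, w e = r)
    (A : Finset α) : ∑ e with s e ∈ A, w e = A.card * r := by
  rw [← Finset.sum_fiberwise_eq_sum_filter, Finset.sum_congr rfl fun i _ => h i, Finset.sum_const,
    nsmul_eq_mul]

/-- Hall's condition for the support of `w` follows by comparing the total weight at a set of left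
vertices with that at its set of neighbours. -/
lemma exists_matching_of_weights [Finite α] {w : E → ℝ} {r : ℝ} (hr : 0 < r) (hw : 0 ≤ w)
    (hs : ∀ i, ∑ e with s e = i, w e = r) (ht : ∀ j, ∑ e with t e = j, w e = r) :
    ∃ m : α → E, (∀ i, s (m i) = i) ∧ Function.Bijective (t ∘ m) ∧ ∀ i, w (m i) ≠ 0 := by
  classical
  let nbrs (i : α) : Finset α := ({e | s e = i ∧ w e ≠ 0} : Finset E).image t
  have hall (A : Finset α) : A.card ≤ (A.biUnion nbrs).card := by
    have hsub : Finset.univ.filter (fun e => s e ∈ A ∧ w e ≠ 0) ⊆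
        Finset.univ.filter fun e => t e ∈ A.biUnion nbrs := by
      intro e he
      rw [Finset.mem_filter_univ] at he ⊢
      refine Finset.mem_biUnion.2 ⟨s e, he.1, Finset.mem_image.2 ⟨e, ?_, rfl⟩⟩
      exact Finset.mem_filter_univ _ |>.2 ⟨rfl, he.2⟩
    have hweight : (A.card : ℝ) * r ≤ (A.biUnion nbrs).card * r := calc
      (A.card : ℝ) * r = ∑ e with s e ∈ A, w e := (sum_filter_mem_eq_card_mul hs A).symm
      _ = ∑ e with s e ∈ A ∧ w e ≠ 0, w e := by
        rw [← Finset.filter_filter, Finset.sum_filter_ne_zero]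
      _ ≤ ∑ e with t e ∈ A.biUnion nbrs, w e :=
        Finset.sum_le_sum_of_subset_of_nonneg hsub fun e _ _ => hw e
      _ = (A.biUnion nbrs).card * r := sum_filter_mem_eq_card_mul ht _
    exact_mod_cast le_of_mul_le_mul_right hweight hr
  obtain ⟨π, hπ, hπm⟩ := (Finset.all_card_le_biUnion_card_iff_exists_injective nbrs).1 hall
  simp only [nbrs, Finset.mem_image, Finset.mem_filter_univ] at hπm
  choose m hm htm using hπm
  refine ⟨m, fun i => (hm i).1, ?_, fun i => (hm i).2⟩
  rw [show t ∘ m = π from funext htm]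
  exact Finite.injective_iff_bijective.1 hπ

lemma isCompressed_balanced [Finite α] (s t : E → α) (k : α ⊕ α) :
    IsCompressed (balanced s t) (vertexSum s t k) where
  apply_le_deg x hx hx0 e := by
    rw [← (mem_balanced k).1 hx (Sum.inl (s e)), vertexSum_inl]
    exact Finset.single_le_sum (fun f _ => hx0 f) (by simp)
  exists_deg_eq_one w hw hw0 hne := by
    classical
    cases nonempty_fintype α
    have hsum := sum_incidence_eq_of_le hw
    obtain ⟨e, he⟩ := Function.ne_iff.1 hne
    have hpos : 0 < ∑ f with s f = s e, w f :=
      Finset.sum_pos' (fun f _ => hw0 f) ⟨e, by simp, (hw0 e).lt_of_ne' he⟩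
    obtain ⟨m, hms, hmt, hm0⟩ := exists_matching_of_weights (s := s) (t := t) hpos hw0
      (fun i => by rw [← sum_incidence_inl (t := t), ← sum_incidence_inl (t := t), hsum])
      (fun j => by rw [← sum_incidence_inr (s := s), ← sum_incidence_inl (t := t), hsum])
    let σ : E → ℤ := ∑ i, Pi.single (m i) 1
    have hσ (l : α ⊕ α) : vertexSum s t l σ = 1 := by
      rw [map_sum]
      simp only [vertexSum_single]
      cases l with
      | inl i => simp [incidence, hms]
      | inr j => simpa [incidence] using hmt.sum_comp fun j' => if j' = j then (1 : ℤ) else 0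
    refine ⟨σ, (mem_balanced k).2 fun l => by rw [hσ, hσ], ?_, hσ k, fun f hf => ?_⟩
    · exact Finset.sum_nonneg fun i _ => Pi.single_nonneg.2 zero_le_one
    · refine (Finset.sum_apply f _ _).trans ?_
      exact Finset.sum_eq_zero fun i _ => Pi.single_eq_of_ne (fun h : f = m i => hm0 i (h ▸ hf)) _

variable [Fintype α]

lemma range_incidence_le_ker (s t : E → α) :
    LinearMap.range (incidence s t).mulVecLin ≤ LinearMap.ker (sideDifference α) := by
  classical
  rw [Matrix.range_mulVecLin, Submodule.span_le]
  rintro _ ⟨e, rfl⟩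
  simp [sideDifference_apply, incidence]

lemma range_incidence_eq_ker [Nonempty α]
    (h : ∀ i j, Pi.single (Sum.inl i) 1 + Pi.single (Sum.inr j) 1 ∈
      LinearMap.range (incidence s t).mulVecLin) :
    LinearMap.range (incidence s t).mulVecLin = LinearMap.ker (sideDifference α) := by
  refine (range_incidence_le_ker s t).antisymm fun y hy => ?_
  obtain ⟨k⟩ := ‹Nonempty α›
  let p (i j : α) : α ⊕ α → ℤ := Pi.single (Sum.inl i) 1 + Pi.single (Sum.inr j) 1
  have hy' : ∑ i, y (Sum.inl i) = ∑ j, y (Sum.inr j) :=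
    sub_eq_zero.1 ((sideDifference_apply y).symm.trans hy)
  have hdecomp : y = ∑ i, y (Sum.inl i) • p i k + ∑ j, y (Sum.inr j) • p k j -
      (∑ i, y (Sum.inl i)) • p k k := by
    ext (i | j)
    · simp [p, Finset.sum_apply, Pi.single_apply, hy']
    · simp [p, Finset.sum_apply, Pi.single_apply]
  rw [hdecomp]
  exact sub_mem (add_mem (sum_mem fun i _ => Submodule.smul_mem _ _ (h i k))
    (sum_mem fun j _ => Submodule.smul_mem _ _ (h k j))) (Submodule.smul_mem _ _ (h k k))

lemma finrank_balanced_add_two_mul_card [Nonempty α]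
    (h : LinearMap.range (incidence s t).mulVecLin = LinearMap.ker (sideDifference α)) :
    Module.finrank ℤ (balanced s t) + 2 * Fintype.card α = Fintype.card E + 2 := by
  have hrange := finrank_inf_ker_add_finrank_map (incidence s t).mulVecLin ⊤
  rw [top_inf_eq, Submodule.map_top, h, finrank_top, Module.finrank_fintype_fun_eq_card] at hrange
  have hone : (1 : α ⊕ α → ℤ) ∈ LinearMap.ker (sideDifference α) := by
    simp [sideDifference_apply]
  have hline : (balanced s t).map (incidence s t).mulVecLin = Submodule.span ℤ {1} := by
    rw [balanced, Submodule.map_comap_eq, h, inf_eq_right, Submodule.span_singleton_le_iff_mem]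
    exact hone
  have hspan : Module.finrank ℤ (Submodule.span ℤ {(1 : α ⊕ α → ℤ)}) = 1 := by
    rw [← (LinearEquiv.toSpanNonzeroSingleton ℤ (α ⊕ α → ℤ) 1 one_ne_zero).finrank_eq,
      Module.finrank_self]
  have hbalanced := finrank_inf_ker_add_finrank_map (incidence s t).mulVecLin (balanced s t)
  have hker : balanced s t ⊓ LinearMap.ker (incidence s t).mulVecLin =
      LinearMap.ker (incidence s t).mulVecLin := inf_eq_right.2 (LinearMap.ker_le_comap _)
  rw [hline, hspan, hker] at hbalanced
  have hside := finrank_ker_sideDifference_add_one (α := α)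
  omega

end BalancedLabelings

section OffDiagonal

/-- The positions off the diagonal of a square matrix, viewed as the edges of a bipartite graph
joining row `p.1.1` to column `p.1.2`. -/
abbrev OffDiagonal (α : Type*) : Type _ :=
  {p : α × α // p.1 ≠ p.2}

variable {α : Type*}

/-- The entries of a matrix off the diagonal, as integers. -/
def offDiagonalEntries (M : Matrix α α ℕ) (p : OffDiagonal α) : ℤ :=
  M p.1.1 p.1.2

lemma injOn_offDiagonalEntries :
    Set.InjOn offDiagonalEntries {M : Matrix α α ℕ | ∀ i, M i i = 0} := by
  intro M hM N hN hMN
  ext i j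
  obtain rfl | hij := eq_or_ne i j
  · rw [hM, hN]
  · exact Int.natCast_inj.1 (congrFun hMN ⟨(i, j), hij⟩)

variable [Fintype α] [DecidableEq α]

/-- The sum of the row or column `k` of a matrix with zero diagonal, recorded by its entries off the
diagonal. -/
def lineSum (k : α ⊕ α) : (OffDiagonal α → ℤ) →ₗ[ℤ] ℤ :=
  vertexSum (fun p => p.1.1) (fun p => p.1.2) k

/-- The lattice of integer matrices with zero diagonal and all line sums equal, recorded by their
entries off the diagonal. -/
def lineSumLattice (α : Type*) [Fintype α] [DecidableEq α] : Submodule ℤ (OffDiagonal α → ℤ) :=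
  balanced (fun p => p.1.1) (fun p => p.1.2)

lemma isCompressed_lineSumLattice (k : α ⊕ α) : IsCompressed (lineSumLattice α) (lineSum k) :=
  isCompressed_balanced _ _ k

lemma card_offDiagonal : Fintype.card (OffDiagonal α) = Fintype.card α * (Fintype.card α - 1) := by
  rw [Fintype.card_subtype, Nat.mul_sub_one, ← Finset.card_univ, ← Finset.offDiag_card]
  congr 1
  ext p
  simp

/-- Since `K_{n,n}` minus a perfect matching is connected for `n > 2`, the incidence vector of a
removed edge is an alternating sum along a path of length three. -/
lemma single_add_single_mem_range_incidence (hα : 2 < Fintype.card α) (i j : α) :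
    Pi.single (Sum.inl i) 1 + Pi.single (Sum.inr j) 1 ∈ LinearMap.range
      (incidence (fun p : OffDiagonal α => p.1.1) (fun p => p.1.2)).mulVecLin := by
  have hedge {i j : α} (hij : i ≠ j) : Pi.single (Sum.inl i) 1 + Pi.single (Sum.inr j) 1 ∈
      LinearMap.range (incidence (fun p : OffDiagonal α => p.1.1) (fun p => p.1.2)).mulVecLin := by
    refine ⟨Pi.single ⟨(i, j), hij⟩ 1, ?_⟩
    ext (k | k) <;> simp [incidence, Pi.single_apply, eq_comm]
  rcases eq_or_ne i j with rfl | hij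
  · obtain ⟨k, hki⟩ := Fintype.exists_ne_of_one_lt_card (by omega : 1 < Fintype.card α) i
    obtain ⟨l, hli, hlk⟩ : ∃ l, l ≠ i ∧ l ≠ k := by
      obtain ⟨l, -, hl⟩ := Finset.exists_mem_notMem_of_card_lt_card
        (Finset.card_le_two.trans_lt hα : ({i, k} : Finset α).card < Finset.univ.card)
      exact ⟨l, by simpa using hl⟩
    have hsum := add_mem (sub_mem (hedge hli.symm) (hedge hlk.symm)) (hedge hki)
    convert hsum using 1
    abel
  · exact hedge hij

lemma even_finrank_lineSumLattice (hα : 2 < Fintype.card α) :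
    Even (Module.finrank ℤ (lineSumLattice α)) := by
  have : Nonempty α := Fintype.card_pos_iff.1 (by omega)
  have hrank := finrank_balanced_add_two_mul_card
    (range_incidence_eq_ker (single_add_single_mem_range_incidence hα))
  have hcard : Even (Fintype.card (OffDiagonal α)) := by
    rw [card_offDiagonal]
    exact Nat.even_mul_pred_self _
  rw [lineSumLattice]
  grind

lemma sum_offDiagonal {R : Type*} [AddCommMonoid R] {f : α → α → R} (hf : ∀ i, f i i = 0) :
    ∑ p : OffDiagonal α, f p.1.1 p.1.2 = ∑ i, ∑ j, f i j := by
  calc ∑ p : OffDiagonal α, f p.1.1 p.1.2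
    _ = ∑ p : α × α with p.1 ≠ p.2, f p.1 p.2 :=
      (Finset.sum_subtype _ (fun _ => Finset.mem_filter_univ _) fun p : α × α => f p.1 p.2).symm
    _ = ∑ p : α × α, f p.1 p.2 :=
      Finset.sum_filter_of_ne fun p _ hp h => hp ((congrArg (f p.1) h.symm).trans (hf p.1))
    _ = ∑ i, ∑ j, f i j := Fintype.sum_prod_type' f

lemma offDiagonalEntries_mem_lineSumLattice {M : Matrix α α ℕ} (hM : ∀ i, M i i = 0)
    {k : α ⊕ α} {r : ℕ} :
    offDiagonalEntries M ∈ lineSumLattice α ∧ lineSum k (offDiagonalEntries M) = r ↔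
      (∀ i, ∑ j, M i j = r) ∧ ∀ j, ∑ i, M i j = r := by
  have hrow (i : α) : ∑ p : OffDiagonal α with p.1.1 = i, offDiagonalEntries M p = ∑ j, M i j := by
    rw [Finset.sum_filter]
    refine (sum_offDiagonal (f := fun i' j => if i' = i then (M i' j : ℤ) else 0) ?_).trans ?_ <;>
      simp [hM]
  have hcol (j : α) : ∑ p : OffDiagonal α with p.1.2 = j, offDiagonalEntries M p = ∑ i, M i j := by
    rw [Finset.sum_filter]
    refine (sum_offDiagonal (f := fun i j' => if j' = j then (M i j' : ℤ) else 0) ?_).trans ?_ <;>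
      simp [hM]
  rw [lineSumLattice, lineSum, mem_balanced_and_vertexSum_eq]
  simp only [hrow, hcol]
  norm_cast

lemma image_offDiagonalEntries (k : α ⊕ α) (r : ℕ) :
    offDiagonalEntries '' {M : Matrix α α ℕ | (∀ i, M i i = 0) ∧ (∀ i, ∑ j, M i j = r) ∧
      ∀ j, ∑ i, M i j = r} = {x ∈ {x | x ∈ lineSumLattice α ∧ 0 ≤ x} | lineSum k x = r} := by
  ext x
  constructor
  · rintro ⟨M, ⟨hM, hsums⟩, rfl⟩
    have hx := (offDiagonalEntries_mem_lineSumLattice hM (k := k)).2 hsums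
    exact ⟨⟨hx.1, fun p => Int.natCast_nonneg _⟩, hx.2⟩
  · rintro ⟨⟨hxL, hx⟩, hxr⟩
    let M : Matrix α α ℕ := fun i j => if hij : i ≠ j then (x ⟨(i, j), hij⟩).toNat else 0
    have hM (i : α) : M i i = 0 := dif_neg (not_not_intro rfl)
    have hMx : offDiagonalEntries M = x := funext fun p => by
      rw [offDiagonalEntries, show M p.1.1 p.1.2 = (x p).toNat from dif_pos p.2,
        Int.toNat_of_nonneg (hx p)]
    refine ⟨M, ⟨hM, (offDiagonalEntries_mem_lineSumLattice hM (k := k)).1 ?_⟩, hMx⟩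
    rw [hMx]
    exact ⟨hxL, hxr⟩

lemma one_mem_lineSumLattice_and_lineSum_one (k : α ⊕ α) :
    1 ∈ lineSumLattice α ∧ lineSum k (1 : OffDiagonal α → ℤ) = (Fintype.card α - 1 : ℕ) := by
  let J : Matrix α α ℕ := fun i j => if i = j then 0 else 1
  have hJ : offDiagonalEntries J = 1 := funext fun p => by
    simp [offDiagonalEntries, J, p.2]
  rw [← hJ, offDiagonalEntries_mem_lineSumLattice (by simp [J])]
  have hcard (i : α) : (Finset.univ.filter fun j => ¬ i = j).card = Fintype.card α - 1 := by
    rw [Finset.filter_not, Finset.filter_eq]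
    simp [Finset.card_sdiff]
  constructor <;> intro i
  · simp [J, Finset.sum_ite, hcard]
  · simp [J, Finset.sum_ite, hcard, eq_comm]

end OffDiagonal

lemma coeff_degSeries_lineSum (n r : ℕ) (k : Fin n ⊕ Fin n) :
    PowerSeries.coeff r (degSeries (lineSum k) {x | x ∈ lineSumLattice (Fin n) ∧ 0 ≤ x}) =
      S n r := by
  rw [coeff_degSeries, ← image_offDiagonalEntries,
    (injOn_offDiagonalEntries.mono fun _ hM => hM.1).ncard_image, ← Nat.card_coe_set_eq]
  rfl

theorem exists_polynomial_S_reciprocity {n : ℕ} (hn : 3 ≤ n) :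
    ∃ Q : Polynomial ℚ, ∀ q : ℕ, Q.eval ((q : ℚ) + 1) = S n (q + 1) ∧
      Q.eval (-((n : ℚ) - 1) - q) = -S n q := by
  obtain ⟨d, rfl⟩ : ∃ d, n = d + 2 := ⟨n - 2, by omega⟩
  obtain ⟨hmem, hone⟩ := one_mem_lineSumLattice_and_lineSum_one (Sum.inl (0 : Fin (d + 2)))
  obtain ⟨Q, hQ⟩ := (isCompressed_lineSumLattice _).exists_polynomial_reciprocity hmem (d := d)
    (hone.trans (by simp))
  refine ⟨Q, fun q => ⟨(hQ q).1.trans (coeff_degSeries_lineSum _ _ _), ?_⟩⟩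
  have heven : Even (Module.finrank ℤ (lineSumLattice (Fin (d + 2)))) :=
    even_finrank_lineSumLattice (by rwa [Fintype.card_fin])
  have hQq := (hQ q).2.trans (congrArg _ (coeff_degSeries_lineSum (d + 2) q _))
  rw [Odd.neg_one_pow heven.add_one, neg_one_mul] at hQq
  rw [← hQq]
  congr 1
  push_cast
  ring

theorem S_polynomial_reciprocity (n : ℕ) (hn : 3 ≤ n) (P : Polynomial ℚ)
    (hP : ∀ r : ℕ, P.eval (r : ℚ) = S n r) :
    (∀ x : ℚ, P.eval (-((n : ℚ) - 1) - x) = -P.eval x) ∧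
      P.comp (Polynomial.C (-((n : ℚ) - 1)) - Polynomial.X) = -P := by
  obtain ⟨Q, hQ⟩ := exists_polynomial_S_reciprocity hn
  have hQP : Q = P := by
    refine Polynomial.eq_of_infinite_eval_eq Q P ?_
    refine Set.infinite_of_injective_forall_mem (f := fun q : ℕ => (q : ℚ) + 1)
      (fun _ _ h => by simpa using h) fun q => ?_
    exact (hQ q).1.trans (mod_cast (hP (q + 1)).symm)
  have hcomp : P.comp (Polynomial.C (-((n : ℚ) - 1)) - Polynomial.X) = -P := by
    refine Polynomial.eq_of_infinite_eval_eq _ _ ?_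
    refine Set.infinite_of_injective_forall_mem Nat.cast_injective fun q : ℕ => ?_
    have hq := (hQ q).2
    rw [hQP, ← hP] at hq
    simpa [Polynomial.eval_comp] using hq
  exact ⟨fun x => by simpa [Polynomial.eval_comp] using congrArg (Polynomial.eval x) hcomp, hcomp⟩
end
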